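/- arXiv:1804.02785 — 6 statements merged into one kernel-verified Lean document; each statement's English description precedes it below -/
import Mathlib

section
/- Let G be a connected weighted undirected graph on vertex set {1,…,n} (n ≥ 2) with positive edge weights and Laplacian matrix L, let u ≠ v be two vertices, let w > 0, and set b = e_u − e_v (difference of standard basis vectors). Then for any vector x solving L x = b (such x exists since G is connected), det((L + w·b·bᵀ)_{−n}) = (1 + w·bᵀx) · det(L_{−n}); equivalently, adding an edge (u,v) of weight w multiplies the weighted number of spanning trees by 1 + w·R_G(u,v). -/
open Matrix

/-- The Laplacian matrix of a weighted graph given by a weight function. -/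
def lapG {V : Type*} [Fintype V] [DecidableEq V] (W : V → V → ℝ) : Matrix V V ℝ :=
  fun i j => if i = j then ∑ k, W i k else -(W i j)

/-- The weighted number of spanning trees: determinant of the Laplacian with the
row and column of the last vertex removed. -/
def nst {n : ℕ} (W : Fin (n + 1) → Fin (n + 1) → ℝ) : ℝ :=
  ((lapG W).submatrix Fin.castSucc Fin.castSucc).det

/-!
The new edge adds `b cᵀ` to `L`, where `b = e_u - e_v` and `c = w • b`. Let `y = x - x r • 1` for
the deleted vertex `r`. Since `L 1 = 0` and `y r = 0`, deleting row and column `r` from `L x = b`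
leaves `L_{-r} y = b_{-r}`; since `c ⬝ᵥ 1 = 0`, also `c_{-r} ⬝ᵥ y = c ⬝ᵥ x`. Hence
`(L + b cᵀ)_{-r} = L_{-r} (1 + y c_{-r}ᵀ)`, and the second factor has determinant `1 + c ⬝ᵥ x`.
This factorisation does not require `L_{-r}` to be invertible.
-/

section Matrix

variable {R m n : Type*} [CommRing R]

theorem det_add_vecMulVec_mulVec [Fintype n] [DecidableEq n] (A : Matrix n n R) (y c : n → R) :
    (A + vecMulVec (A *ᵥ y) c).det = (1 + c ⬝ᵥ y) * A.det :=
  calc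
    (A + vecMulVec (A *ᵥ y) c).det = (A * (1 + vecMulVec y c)).det := by
      rw [mul_add, mul_one, mul_vecMulVec]
    _ = (1 + c ⬝ᵥ y) * A.det := by
      rw [det_mul, vecMulVec_eq Unit, det_one_add_replicateCol_mul_replicateRow, mul_comm]

variable [Fintype n] [DecidableEq n] (r : n)

theorem dotProduct_subtype_ne_sub {c : n → R} (hc : c ⬝ᵥ 1 = 0) (x : n → R) :
    (fun j : {j // j ≠ r} ↦ c j) ⬝ᵥ (fun j ↦ x j - x r) = c ⬝ᵥ x :=
  calc
    (fun j : {j // j ≠ r} ↦ c j) ⬝ᵥ (fun j ↦ x j - x r) = c ⬝ᵥ (x - x r • 1) := by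
      simp [dotProduct, Fintype.sum_eq_add_sum_subtype_ne _ r]
    _ = c ⬝ᵥ x := by
      rw [dotProduct_sub, dotProduct_smul, hc, smul_zero, sub_zero]

theorem submatrix_subtype_ne_mulVec_sub {A : Matrix m n R} (hA : A *ᵥ 1 = 0) {ι : Type*}
    (f : ι → m) (x : n → R) :
    A.submatrix f ((↑) : {j // j ≠ r} → n) *ᵥ (fun j ↦ x j - x r) = (A *ᵥ x) ∘ f :=
  funext fun i ↦ dotProduct_subtype_ne_sub r (congrFun hA (f i)) x

theorem det_submatrix_add_vecMulVec_mulVec {A : Matrix m n R} (hA : A *ᵥ 1 = 0)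
    {c : n → R} (hc : c ⬝ᵥ 1 = 0) (f : {j // j ≠ r} → m) (x : n → R) :
    ((A + vecMulVec (A *ᵥ x) c).submatrix f ((↑) : {j // j ≠ r} → n)).det =
      (1 + c ⬝ᵥ x) * (A.submatrix f ((↑) : {j // j ≠ r} → n)).det := by
  let y : {j // j ≠ r} → R := fun j ↦ x j - x r
  let c' : {j // j ≠ r} → R := fun j ↦ c j
  let A' : Matrix {j // j ≠ r} {j // j ≠ r} R :=
    A.submatrix f ((↑) : {j // j ≠ r} → n)
  have hAy : A' *ᵥ y = (A *ᵥ x) ∘ f := submatrix_subtype_ne_mulVec_sub r hA f x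
  have hcy : c' ⬝ᵥ y = c ⬝ᵥ x := dotProduct_subtype_ne_sub r hc x
  calc
    ((A + vecMulVec (A *ᵥ x) c).submatrix f ((↑) : {j // j ≠ r} → n)).det =
        (A' + vecMulVec (A' *ᵥ y) c').det := by rw [hAy]; rfl
    _ = (1 + c ⬝ᵥ x) * A'.det := by rw [det_add_vecMulVec_mulVec, hcy]

theorem det_submatrix_castSucc_castSucc {k : ℕ} (A : Matrix (Fin (k + 1)) (Fin (k + 1)) R) :
    (A.submatrix Fin.castSucc Fin.castSucc).det =
      (A.submatrix ((↑) : {i // i ≠ Fin.last k} → _) (↑)).det := by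
  rw [← det_submatrix_equiv_self (finSuccAboveEquiv (Fin.last k)), submatrix_submatrix]
  congr 2 <;> ext i <;> simp [finSuccAboveEquiv_apply]

end Matrix

section Laplacian

variable {V : Type*} [Fintype V] [DecidableEq V] {W : V → V → ℝ}

theorem lapG_eq_diagonal_sub (hdiag : ∀ i, W i i = 0) :
    lapG W = diagonal (fun i ↦ ∑ k, W i k) - of W := by
  ext i j
  rcases eq_or_ne i j with rfl | hij
  · simp [lapG, hdiag]
  · simp [lapG, hij]

theorem lapG_mulVec_one (hdiag : ∀ i, W i i = 0) : lapG W *ᵥ 1 = 0 := by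
  ext i
  rw [lapG_eq_diagonal_sub hdiag, sub_mulVec, Pi.sub_apply, mulVec_diagonal]
  simp [mulVec, dotProduct]

-- A directed edge `u → v` is the case `b = e_u`, `c = e_u - e_v`; an undirected edge has `b = c`.
theorem stmt0_general (hdiag : ∀ i, W i i = 0) (r : V) (w : ℝ) {b c x : V → ℝ}
    (hx : lapG W *ᵥ x = b) (hc : c ⬝ᵥ 1 = 0) :
    ((lapG W + w • vecMulVec b c).submatrix ((↑) : {i // i ≠ r} → V) (↑)).det =
      (1 + w * (c ⬝ᵥ x)) * ((lapG W).submatrix ((↑) : {i // i ≠ r} → V) (↑)).det := by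
  have hwc : (w • c) ⬝ᵥ 1 = 0 := by rw [smul_dotProduct, hc, smul_zero]
  rw [← hx, ← vecMulVec_smul, det_submatrix_add_vecMulVec_mulVec r (lapG_mulVec_one hdiag) hwc,
    smul_dotProduct, smul_eq_mul]

end Laplacian

theorem stmt0 (n : ℕ) (hn : 1 ≤ n) (W : Fin (n + 1) → Fin (n + 1) → ℝ)
    (hsym : ∀ i j, W i j = W j i) (hdiag : ∀ i, W i i = 0) (hnonneg : ∀ i j, 0 ≤ W i j)
    (hconn : (SimpleGraph.fromRel (fun i j => W i j ≠ 0)).Connected)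
    (u v : Fin (n + 1)) (huv : u ≠ v) (w : ℝ) (hw : 0 < w)
    (x : Fin (n + 1) → ℝ)
    (hx : (lapG W).mulVec x = (Pi.single u 1 - Pi.single v 1)) :
    ((lapG W + w • Matrix.vecMulVec (Pi.single u 1 - Pi.single v 1)
        (Pi.single u 1 - Pi.single v 1)).submatrix Fin.castSucc Fin.castSucc).det
      = (1 + w * ((Pi.single u 1 - Pi.single v 1) ⬝ᵥ x)) *
        ((lapG W).submatrix Fin.castSucc Fin.castSucc).det := by
  simp only [det_submatrix_castSucc_castSucc]
  exact stmt0_general hdiag (Fin.last n) w hx (by simp [sub_dotProduct])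
end

section
/- Let G = (V,E) be a connected weighted undirected graph with positive edge weights and let Q be a finite set of candidate edges on V, each with a positive weight. Then the set function f : 2^Q → ℝ defined by f(S) = log T(G + S) is monotone (f(S) ≤ f(T) whenever S ⊆ T ⊆ Q) and submodular (f(S ∪ {e}) − f(S) ≥ f(T ∪ {e}) − f(T) for all S ⊆ T ⊆ Q and e ∈ Q ∖ T). -/
open Matrix

/-- The weight function obtained from `W` by adding the edges in `S`, where the
edge `e ∈ S` has weight `qw e`. -/
def addEdgeSet {n : ℕ} (W : Fin (n + 1) → Fin (n + 1) → ℝ)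
    (qw : Sym2 (Fin (n + 1)) → ℝ) (S : Finset (Sym2 (Fin (n + 1)))) :
    Fin (n + 1) → Fin (n + 1) → ℝ :=
  fun a b => W a b + if s(a, b) ∈ S then qw s(a, b) else 0

/-- `f S = log T(G + S)`. -/
noncomputable def logNst {n : ℕ} (W : Fin (n + 1) → Fin (n + 1) → ℝ)
    (qw : Sym2 (Fin (n + 1)) → ℝ) (S : Finset (Sym2 (Fin (n + 1)))) : ℝ :=
  Real.log (nst (addEdgeSet W qw S))

/-!
Adding edges adds positive semidefinite matrices to the reduced Laplacian, which is positive
definite because the graph is connected. So it suffices to treat `S ↦ log det (A + ∑ i ∈ S, M i)`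
with `A` positive definite and each `M i` positive semidefinite. Writing `M = Cᴴ * C`,
Sylvester's identity gives `det (A + M) / det A = det (1 + C * A⁻¹ * Cᴴ)`. This ratio is at least
`1`, which is monotonicity, and it decreases as `A` grows in the Loewner order, since inversion
is antitone and the determinant is monotone; that is submodularity.
-/

open Finset
open scoped ComplexOrder MatrixOrder

section Loewner

variable {𝕜 m : Type*} [RCLike 𝕜]

lemma posDef_of_posDef_of_le {A B : Matrix m m 𝕜} (hA : A.PosDef) (hAB : A ≤ B) : B.PosDef := by
  simpa using hA.add_posSemidef (le_iff.1 hAB)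

variable [Fintype m] [DecidableEq m] {A B M : Matrix m m 𝕜}

lemma inv_le_inv_of_posDef_of_le (hA : A.PosDef) (hAB : A ≤ B) : B⁻¹ ≤ A⁻¹ := by
  have hB := posDef_of_posDef_of_le hA hAB
  have := hA.isUnit.invertible
  have := hB.isUnit.invertible
  have := hA.inv.isUnit.invertible
  -- The Schur complements of this block matrix are `B - A` and `A⁻¹ - B⁻¹`.
  have hblock : (fromBlocks B 1 1ᴴ A⁻¹).PosSemidef := by
    rw [hA.inv.fromBlocks₂₂]
    simpa using le_iff.1 hAB
  rw [hB.fromBlocks₁₁] at hblock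
  simpa [le_iff] using hblock

lemma one_le_det_of_one_le (hA : 1 ≤ A) : 1 ≤ A.det := by
  have hherm : A.IsHermitian := (posDef_of_posDef_of_le .one hA).isHermitian
  have hspec : ∀ x ∈ spectrum ℝ A, 1 ≤ x := by
    rw [← algebraMap_le_iff_le_spectrum]
    simpa using hA
  rw [hherm.det_eq_prod_eigenvalues]
  exact_mod_cast one_le_prod fun i _ ↦ hspec _ (hherm.eigenvalues_mem_spectrum_real i)

lemma det_add_conjTranspose_mul_self_div_det {k : Type*} [Fintype k] [DecidableEq k]
    (hA : A.PosDef) (C : Matrix k m 𝕜) :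
    (A + Cᴴ * C).det / A.det = (1 + C * A⁻¹ * Cᴴ).det := by
  rw [det_add_mul _ _ hA.det_pos.ne'.isUnit, mul_div_cancel_left₀ _ hA.det_pos.ne']

lemma det_le_det_of_posDef_of_le (hA : A.PosDef) (hAB : A ≤ B) : A.det ≤ B.det := by
  obtain ⟨C, hC⟩ := CStarAlgebra.nonneg_iff_eq_star_mul_self.1 (sub_nonneg.2 hAB)
  rw [← add_sub_cancel A B, hC, star_eq_conjTranspose, det_add_mul _ _ hA.det_pos.ne'.isUnit]
  refine le_mul_of_one_le_right hA.det_pos.le (one_le_det_of_one_le (le_add_of_nonneg_right ?_))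
  exact (hA.inv.posSemidef.mul_mul_conjTranspose_same C).nonneg

lemma det_add_div_det_le_of_posDef_of_le (hA : A.PosDef) (hAB : A ≤ B) (hM : M.PosSemidef) :
    (B + M).det / B.det ≤ (A + M).det / A.det := by
  have hB := posDef_of_posDef_of_le hA hAB
  obtain ⟨C, rfl⟩ := CStarAlgebra.nonneg_iff_eq_star_mul_self.1 hM.nonneg
  rw [star_eq_conjTranspose, det_add_conjTranspose_mul_self_div_det hA,
    det_add_conjTranspose_mul_self_div_det hB]
  refine det_le_det_of_posDef_of_le ?_ (add_le_add_right ?_ 1)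
  · exact PosDef.one.add_posSemidef (hB.inv.posSemidef.mul_mul_conjTranspose_same C)
  · exact star_right_conjugate_le_conjugate (inv_le_inv_of_posDef_of_le hA hAB) C

end Loewner

/-- Submodularity of the set function `F` on the subsets of the ground set `Q`, expressed through
diminishing marginal gains. -/
def IsSubmodularOn {ι : Type*} [DecidableEq ι] (F : Finset ι → ℝ) (Q : Finset ι) : Prop :=
  ∀ S T : Finset ι, S ⊆ T → T ⊆ Q → ∀ e ∈ Q, e ∉ T → F (insert e T) - F T ≤ F (insert e S) - F S

section LogDet

variable {ι m : Type*} {A : Matrix m m ℝ} {M : ι → Matrix m m ℝ} {Q : Finset ι}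

lemma add_sum_le_add_sum_of_subset (hM : ∀ i ∈ Q, (M i).PosSemidef) {S T : Finset ι}
    (hST : S ⊆ T) (hT : T ⊆ Q) : A + ∑ i ∈ S, M i ≤ A + ∑ i ∈ T, M i :=
  add_le_add_right (sum_le_sum_of_subset_of_nonneg hST fun i hi _ ↦ (hM i (hT hi)).nonneg) A

lemma posDef_add_sum (hA : A.PosDef) (hM : ∀ i ∈ Q, (M i).PosSemidef) :
    (A + ∑ i ∈ Q, M i).PosDef :=
  hA.add_posSemidef (posSemidef_sum Q hM)

variable [Fintype m] [DecidableEq m]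

lemma log_det_add_sub_log_det_le_of_posDef_of_le {B N : Matrix m m ℝ} (hA : A.PosDef)
    (hAB : A ≤ B) (hN : N.PosSemidef) :
    Real.log (B + N).det - Real.log B.det ≤ Real.log (A + N).det - Real.log A.det := by
  have hB := posDef_of_posDef_of_le hA hAB
  have hAN := (hA.add_posSemidef hN).det_pos
  have hBN := (hB.add_posSemidef hN).det_pos
  rw [← Real.log_div hBN.ne' hB.det_pos.ne', ← Real.log_div hAN.ne' hA.det_pos.ne']
  exact Real.log_le_log (div_pos hBN hB.det_pos) (det_add_div_det_le_of_posDef_of_le hA hAB hN)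

theorem monotoneOn_log_det_add_sum (hA : A.PosDef) (hM : ∀ i ∈ Q, (M i).PosSemidef) :
    MonotoneOn (fun S ↦ Real.log (A + ∑ i ∈ S, M i).det) (Set.Iic Q) := by
  intro S hS T hT hST
  have hpos := posDef_add_sum hA fun i hi ↦ hM i (hS hi)
  exact Real.log_le_log hpos.det_pos
    (det_le_det_of_posDef_of_le hpos (add_sum_le_add_sum_of_subset hM hST hT))

theorem isSubmodularOn_log_det_add_sum [DecidableEq ι] (hA : A.PosDef)
    (hM : ∀ i ∈ Q, (M i).PosSemidef) :
    IsSubmodularOn (fun S ↦ Real.log (A + ∑ i ∈ S, M i).det) Q := by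
  intro S T hST hT e he heT
  have hS := hST.trans hT
  have hgain := log_det_add_sub_log_det_le_of_posDef_of_le
    (posDef_add_sum hA fun i hi ↦ hM i (hS hi)) (add_sum_le_add_sum_of_subset hM hST hT) (hM e he)
  simpa only [sum_insert heT, sum_insert (fun h ↦ heT (hST h)), add_comm (M e), ← add_assoc]
    using hgain

end LogDet

lemma dotProduct_submatrix_mulVec {R V m : Type*} [NonUnitalNonAssocSemiring R] [Fintype V]
    [Fintype m] {f : m → V} (hf : f.Injective) (A : Matrix V V R) (y : m → R) :
    y ⬝ᵥ A.submatrix f f *ᵥ y = f.extend y 0 ⬝ᵥ A *ᵥ f.extend y 0 := by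
  have hmulVec : ∀ i, (A.submatrix f f *ᵥ y) i = (A *ᵥ f.extend y 0) (f i) := fun i ↦
    Fintype.sum_of_injective f hf _ _ (fun j hj ↦ by simp [Function.extend_apply' _ _ _ hj])
      fun j ↦ by simp [hf.extend_apply]
  exact Fintype.sum_of_injective f hf _ _ (fun i hi ↦ by simp [Function.extend_apply' _ _ _ hi])
    fun i ↦ by simp [hf.extend_apply, hmulVec]

section Laplacian

variable {V : Type*}

/-- `W` is the weight function of a loopless undirected graph on `V`; non-adjacent pairs have
weight `0`. Both the given graph and the edges to be added are encoded this way. -/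
structure IsGraphWeight (W : V → V → ℝ) : Prop where
  symm : ∀ i j, W i j = W j i
  diag : ∀ i, W i i = 0
  nonneg : ∀ i j, 0 ≤ W i j

variable [Fintype V] [DecidableEq V] {W : V → V → ℝ}

lemma lapG_add_sum {ι : Type*} (W : V → V → ℝ) (U : ι → V → V → ℝ) (S : Finset ι) :
    lapG (W + ∑ i ∈ S, U i) = lapG W + ∑ i ∈ S, lapG (U i) := by
  ext a b
  by_cases hab : a = b
  · simp [lapG, hab, Finset.sum_apply, Matrix.sum_apply, sum_add_distrib,
      sum_comm (s := univ) (t := S)]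
  · simp [lapG, hab, Finset.sum_apply, Matrix.sum_apply, add_comm]

lemma lapG_mulVec_apply (hdiag : ∀ i, W i i = 0) (x : V → ℝ) (i : V) :
    (lapG W *ᵥ x) i = ∑ j, W i j * (x i - x j) := by
  have hlap : lapG W = diagonal (fun i ↦ ∑ j, W i j) - of W := by
    ext a b
    by_cases hab : a = b <;> simp [lapG, hab, hdiag]
  rw [hlap, sub_mulVec, Pi.sub_apply, mulVec_diagonal]
  simp only [mulVec, dotProduct, of_apply, mul_sub, sum_sub_distrib, sum_mul]

lemma two_mul_dotProduct_lapG_mulVec (hsym : ∀ i j, W i j = W j i) (hdiag : ∀ i, W i i = 0)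
    (x : V → ℝ) : 2 * (x ⬝ᵥ lapG W *ᵥ x) = ∑ i, ∑ j, W i j * (x i - x j) ^ 2 := by
  have hquad : x ⬝ᵥ lapG W *ᵥ x = ∑ i, ∑ j, x i * (W i j * (x i - x j)) := by
    simp only [dotProduct, lapG_mulVec_apply hdiag, mul_sum]
  have hquad_swap : x ⬝ᵥ lapG W *ᵥ x = ∑ i, ∑ j, x j * (W i j * (x j - x i)) := by
    rw [hquad, sum_comm]
    simp only [hsym]
  rw [two_mul]
  nth_rewrite 1 [hquad]
  rw [hquad_swap]
  simp only [← sum_add_distrib]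
  exact sum_congr rfl fun i _ ↦ sum_congr rfl fun j _ ↦ by ring

lemma lapG_posSemidef (hW : IsGraphWeight W) : (lapG W).PosSemidef := by
  refine .of_dotProduct_mulVec_nonneg ?_ fun x ↦ ?_
  · ext i j
    by_cases hij : i = j
    · simp [hij]
    · simp [lapG, hij, Ne.symm hij, hW.symm i j]
  · have hsum : 0 ≤ ∑ i, ∑ j, W i j * (x i - x j) ^ 2 := sum_nonneg fun i _ ↦
      sum_nonneg fun j _ ↦ mul_nonneg (hW.nonneg i j) (sq_nonneg _)
    rw [← two_mul_dotProduct_lapG_mulVec hW.symm hW.diag] at hsum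
    simpa using hsum

lemma eq_of_dotProduct_lapG_mulVec_eq_zero (hW : IsGraphWeight W)
    (hconn : (SimpleGraph.fromRel fun i j ↦ W i j ≠ 0).Connected) {x : V → ℝ}
    (hx : x ⬝ᵥ lapG W *ᵥ x = 0) (i j : V) : x i = x j := by
  have hterm : ∀ i j, 0 ≤ W i j * (x i - x j) ^ 2 := fun i j ↦
    mul_nonneg (hW.nonneg i j) (sq_nonneg _)
  have hzero : ∀ i j, W i j * (x i - x j) ^ 2 = 0 := by
    have hsum := two_mul_dotProduct_lapG_mulVec hW.symm hW.diag x
    rw [hx, mul_zero, eq_comm,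
      Fintype.sum_eq_zero_iff_of_nonneg fun i ↦ sum_nonneg fun j _ ↦ hterm i j] at hsum
    exact fun i ↦ congrFun ((Fintype.sum_eq_zero_iff_of_nonneg (hterm i)).1 (congrFun hsum i))
  have hadj : ∀ i j, W i j ≠ 0 → x i = x j := fun i j hij ↦ by
    simpa [hij, sub_eq_zero] using hzero i j
  obtain ⟨p⟩ := hconn.preconnected i j
  induction p with
  | nil => rfl
  | cons h _ ih => exact (h.2.elim (hadj _ _) fun h ↦ (hadj _ _ h).symm).trans ih

lemma lapG_submatrix_posDef {m : Type*} (hW : IsGraphWeight W)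
    (hconn : (SimpleGraph.fromRel fun i j ↦ W i j ≠ 0).Connected) {f : m → V}
    (hf : f.Injective) {r : V} (hr : r ∉ Set.range f) : ((lapG W).submatrix f f).PosDef := by
  have := Fintype.ofInjective f hf
  have hpsd : ((lapG W).submatrix f f).PosSemidef := (lapG_posSemidef hW).submatrix f
  refine .of_dotProduct_mulVec_pos hpsd.isHermitian fun y hy ↦ ?_
  refine (hpsd.dotProduct_mulVec_nonneg y).lt_of_ne' fun hzero ↦ hy (funext fun i ↦ ?_)
  rw [star_trivial, dotProduct_submatrix_mulVec hf] at hzero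
  have hconst := eq_of_dotProduct_lapG_mulVec_eq_zero hW hconn hzero (f i) r
  simpa [hf.extend_apply, Function.extend_apply' _ _ _ hr] using hconst

end Laplacian

section SingleEdge

variable {V : Type*} [DecidableEq V]

/-- The weight function of the graph on `V` whose only edge is `e`, of weight `c`. -/
def edgeWeight (e : Sym2 V) (c : ℝ) : V → V → ℝ :=
  fun a b ↦ if s(a, b) = e then c else 0

lemma isGraphWeight_edgeWeight {e : Sym2 V} (he : ¬ e.IsDiag) {c : ℝ} (hc : 0 ≤ c) :
    IsGraphWeight (edgeWeight e c) where
  symm i j := by simp only [edgeWeight, Sym2.eq_swap]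
  diag i := if_neg fun h : s(i, i) = e ↦ he (h ▸ Sym2.mk_isDiag_iff.2 rfl)
  nonneg i j := by unfold edgeWeight; positivity

lemma addEdgeSet_eq_add_sum_edgeWeight {n : ℕ} (W : Fin (n + 1) → Fin (n + 1) → ℝ)
    (qw : Sym2 (Fin (n + 1)) → ℝ) (S : Finset (Sym2 (Fin (n + 1)))) :
    addEdgeSet W qw S = W + ∑ e ∈ S, edgeWeight e (qw e) := by
  ext a b
  simp [addEdgeSet, edgeWeight, Finset.sum_apply]

end SingleEdge

theorem stmt2_general {V m ι : Type*} [Fintype V] [DecidableEq V] [Fintype m] [DecidableEq m]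
    [DecidableEq ι] {W : V → V → ℝ} (hW : IsGraphWeight W)
    (hconn : (SimpleGraph.fromRel fun i j ↦ W i j ≠ 0).Connected) {U : ι → V → V → ℝ}
    {Q : Finset ι} (hU : ∀ i ∈ Q, IsGraphWeight (U i)) {f : m → V} (hf : f.Injective) {r : V}
    (hr : r ∉ Set.range f) :
    MonotoneOn (fun S ↦ Real.log ((lapG (W + ∑ i ∈ S, U i)).submatrix f f).det) (Set.Iic Q) ∧
      IsSubmodularOn (fun S ↦ Real.log ((lapG (W + ∑ i ∈ S, U i)).submatrix f f).det) Q := by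
  have hlap : ∀ S : Finset ι, (lapG (W + ∑ i ∈ S, U i)).submatrix f f =
      (lapG W).submatrix f f + ∑ i ∈ S, (lapG (U i)).submatrix f f := fun S ↦ by
    rw [lapG_add_sum]
    ext a b
    simp [Matrix.sum_apply]
  have hA := lapG_submatrix_posDef hW hconn hf hr
  have hM : ∀ i ∈ Q, ((lapG (U i)).submatrix f f).PosSemidef := fun i hi ↦
    (lapG_posSemidef (hU i hi)).submatrix f
  simp only [hlap]
  exact ⟨monotoneOn_log_det_add_sum hA hM, isSubmodularOn_log_det_add_sum hA hM⟩

theorem stmt2 (n : ℕ) (W : Fin (n + 1) → Fin (n + 1) → ℝ)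
    (hsym : ∀ i j, W i j = W j i) (hdiag : ∀ i, W i i = 0) (hnonneg : ∀ i j, 0 ≤ W i j)
    (hconn : (SimpleGraph.fromRel (fun i j => W i j ≠ 0)).Connected)
    (Q : Finset (Sym2 (Fin (n + 1)))) (hQ : ∀ e ∈ Q, ¬ e.IsDiag)
    (qw : Sym2 (Fin (n + 1)) → ℝ) (hqw : ∀ e ∈ Q, 0 < qw e) :
    (∀ S T : Finset (Sym2 (Fin (n + 1))), S ⊆ T → T ⊆ Q →
      logNst W qw S ≤ logNst W qw T) ∧
    (∀ S T : Finset (Sym2 (Fin (n + 1))), S ⊆ T → T ⊆ Q → ∀ e ∈ Q, e ∉ T →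
      logNst W qw (insert e T) - logNst W qw T ≤
        logNst W qw (insert e S) - logNst W qw S) := by
  have hgen := stmt2_general ⟨hsym, hdiag, hnonneg⟩ hconn
    (fun e he ↦ isGraphWeight_edgeWeight (hQ e he) (hqw e he).le) (Fin.castSucc_injective n)
    (r := Fin.last n) fun ⟨i, hi⟩ ↦ i.castSucc_ne_last hi
  simp only [← addEdgeSet_eq_add_sum_edgeWeight] at hgen
  exact ⟨fun S T hST hT ↦ hgen.1 (hST.trans hT) hT hST, hgen.2⟩
end

section
/- For any non-negative real numbers a, b and any 0 < ε ≤ 1/2 such that (1 − ε)·a ≤ b ≤ (1 + ε)·a, it holds that (1 − 2ε)·log(1 + a) ≤ log(1 + b) ≤ (1 + 2ε)·log(1 + a). -/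
/-! Taking logarithms in Bernoulli's inequality `(1 + s) ^ p ≤ 1 + p * s`, `0 ≤ p ≤ 1`, gives
`p * log (1 + s) ≤ log (1 + p * s)`, and the reverse for `1 ≤ p` on replacing `(p, s)` by
`(p⁻¹, p * s)`. With `p = 1 ∓ ε` this transfers the relative error `ε` from `a` to `log (1 + a)`
without loss; the theorem is the weaker case of relative error `2 * ε`. -/

section Bernoulli

variable {p s : ℝ}

theorem mul_log_one_add_le_log_one_add_mul (hs : -1 < s) (hp₀ : 0 ≤ p) (hp₁ : p ≤ 1) :
    p * Real.log (1 + s) ≤ Real.log (1 + p * s) := by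
  have hs' : 0 < 1 + s := by linarith
  calc p * Real.log (1 + s) = Real.log ((1 + s) ^ p) := (Real.log_rpow hs' p).symm
    _ ≤ Real.log (1 + p * s) :=
      Real.log_le_log (Real.rpow_pos_of_pos hs' p)
        (rpow_one_add_le_one_add_mul_self hs.le hp₀ hp₁)

theorem log_one_add_mul_le_mul_log_one_add (hp : 1 ≤ p) (hps : -1 < p * s) :
    Real.log (1 + p * s) ≤ p * Real.log (1 + s) := by
  have hp₀ : 0 < p := by linarith
  have h := mul_log_one_add_le_log_one_add_mul hps (inv_nonneg.mpr hp₀.le)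
    (inv_le_one_of_one_le₀ hp)
  rwa [inv_mul_cancel_left₀ hp₀.ne', inv_mul_le_iff₀ hp₀] at h

end Bernoulli

section Comparison

variable {a b c : ℝ}

theorem mul_log_one_add_le_log_one_add_of_mul_le (ha : 0 ≤ a) (hb : 0 ≤ b) (hc : c ≤ 1)
    (h : c * a ≤ b) : c * Real.log (1 + a) ≤ Real.log (1 + b) := by
  rcases le_total 0 c with hc₀ | hc₀
  · calc c * Real.log (1 + a) ≤ Real.log (1 + c * a) :=
          mul_log_one_add_le_log_one_add_mul (by linarith) hc₀ hc
      _ ≤ Real.log (1 + b) := Real.log_le_log (by positivity) (by linarith)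
  · calc c * Real.log (1 + a) ≤ 0 :=
          mul_nonpos_of_nonpos_of_nonneg hc₀ (Real.log_nonneg (by linarith))
      _ ≤ Real.log (1 + b) := Real.log_nonneg (by linarith)

theorem log_one_add_le_mul_log_one_add_of_le_mul (hb : -1 < b) (hc : 1 ≤ c) (h : b ≤ c * a) :
    Real.log (1 + b) ≤ c * Real.log (1 + a) :=
  calc Real.log (1 + b) ≤ Real.log (1 + c * a) := Real.log_le_log (by linarith) (by linarith)
    _ ≤ c * Real.log (1 + a) := log_one_add_mul_le_mul_log_one_add hc (hb.trans_le h)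

end Comparison

theorem stmt3_general {a b ε : ℝ} (ha : 0 ≤ a) (hb : 0 ≤ b) (hε : 0 ≤ ε)
    (h1 : (1 - ε) * a ≤ b) (h2 : b ≤ (1 + ε) * a) :
    (1 - ε) * Real.log (1 + a) ≤ Real.log (1 + b) ∧
      Real.log (1 + b) ≤ (1 + ε) * Real.log (1 + a) :=
  ⟨mul_log_one_add_le_log_one_add_of_mul_le ha hb (by linarith) h1,
    log_one_add_le_mul_log_one_add_of_le_mul (by linarith) (by linarith) h2⟩

theorem stmt3 (a b ε : ℝ) (ha : 0 ≤ a) (hb : 0 ≤ b)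
    (hε0 : 0 < ε) (hε : ε ≤ 1 / 2)
    (h1 : (1 - ε) * a ≤ b) (h2 : b ≤ (1 + ε) * a) :
    (1 - 2 * ε) * Real.log (1 + a) ≤ Real.log (1 + b) ∧
      Real.log (1 + b) ≤ (1 + 2 * ε) * Real.log (1 + a) := by
  have hεa : 0 ≤ ε * a := by positivity
  exact stmt3_general ha hb (by positivity) (by linarith [hεa]) (by linarith [hεa])
end

section
/- Let Q be a finite set, let f : 2^Q → ℝ be monotone and submodular, let 0 < ε ≤ 1/2 and let k ≥ 1 be an integer. Let O ⊆ Q with |O| ≤ k. Suppose S_0 = ∅ and, for i = 0,…,k−1, S_{i+1} = S_i ∪ {e_{i+1}} for some e_{i+1} ∈ Q satisfying f(S_{i+1}) − f(S_i) ≥ (1 − ε) · max_{e ∈ Q} (f(S_i ∪ {e}) − f(S_i)). Then f(S_k) − f(∅) ≥ (1 − (1 − (1−ε)/k)^k) · (f(O) − f(∅)) ≥ (1 − 1/e − ε) · (f(O) − f(∅)). -/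
/-!
Adding the elements of the comparison set `O` to a greedy set `A` one at a time and using
diminishing returns, `f O - f A ≤ f (O ∪ A) - f A` is at most the sum of the marginal gains at `A`
of the at most `k` elements of `O`. Hence a near-optimal step from `A` closes at least a fraction
`(1 - ε) / k` of the gap to `f O`, and after `k` steps at most a fraction
`(1 - (1 - ε) / k) ^ k ≤ exp (-(1 - ε))` of the gap is left. Since `-(1 - ε)` is the convex
combination of `-1` and `0` with weights `1 - ε` and `ε`, convexity of `exp` bounds this by
`1 / e + ε`.
-/

theorem exp_neg_one_sub_le {ε : ℝ} (hε0 : 0 ≤ ε) (hε1 : ε ≤ 1) :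
    Real.exp (-(1 - ε)) ≤ 1 / Real.exp 1 + ε := by
  calc Real.exp (-(1 - ε))
      = Real.exp ((1 - ε) • (-1) + ε • 0) := by simp
    _ ≤ (1 - ε) • Real.exp (-1) + ε • Real.exp 0 :=
        convexOn_exp.2 (Set.mem_univ _) (Set.mem_univ _) (sub_nonneg.mpr hε1) hε0
          (sub_add_cancel 1 ε)
    _ = (1 - ε) * (1 / Real.exp 1) + ε := by simp [Real.exp_neg]
    _ ≤ 1 / Real.exp 1 + ε := by
        gcongr
        exact mul_le_of_le_one_left (by positivity) (sub_le_self 1 hε0)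

theorem one_sub_inv_exp_sub_le_one_sub_pow {ε : ℝ} {k : ℕ} (hε0 : 0 ≤ ε) (hε1 : ε ≤ 1)
    (hk : 1 ≤ k) :
    1 - 1 / Real.exp 1 - ε ≤ 1 - (1 - (1 - ε) / k) ^ k := by
  have one_sub_le : 1 - ε ≤ k := (sub_le_self 1 hε0).trans (Nat.one_le_cast.mpr hk)
  have pow_le : (1 - (1 - ε) / k) ^ k ≤ 1 / Real.exp 1 + ε :=
    (Real.one_sub_div_pow_le_exp_neg one_sub_le).trans (exp_neg_one_sub_le hε0 hε1)
  linarith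

section Submodular

variable {α M R : Type*} [DecidableEq α]

/-- Submodularity of a set function on the subsets of `Q`, in the diminishing-returns form: the
marginal gain of an element does not increase when the set grows. -/
def SubmodularOn [AddCommGroup M] [PartialOrder M] (f : Finset α → M) (Q : Finset α) : Prop :=
  ∀ A B : Finset α, A ⊆ B → B ⊆ Q → ∀ x ∈ Q, x ∉ B →
    f (insert x B) - f B ≤ f (insert x A) - f A

/-- `S 0 ⊆ S 1 ⊆ ⋯ ⊆ S n` is an approximately greedy chain of subsets of `Q` for the set function
`f`: every step gains at least `c` times what the best single element of `Q` would gain. A step may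
add several elements, and `S i` is unconstrained for `i > n`. -/
structure IsApproxGreedy (f : Finset α → ℝ) (Q : Finset α) (c : ℝ) (n : ℕ)
    (S : ℕ → Finset α) : Prop where
  subset_succ : ∀ i < n, S i ⊆ S (i + 1)
  subset_ground : ∀ i ≤ n, S i ⊆ Q
  mul_gain_le : ∀ i < n, ∀ x ∈ Q, c * (f (insert x (S i)) - f (S i)) ≤ f (S (i + 1)) - f (S i)

theorem SubmodularOn.union_sub_le_sum [AddCommGroup M] [PartialOrder M] [IsOrderedAddMonoid M]
    {f : Finset α → M} {Q A T : Finset α} (hf : SubmodularOn f Q) (hA : A ⊆ Q) (hT : T ⊆ Q) :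
    f (T ∪ A) - f A ≤ ∑ x ∈ T, (f (insert x A) - f A) := by
  induction T using Finset.induction_on with
  | empty => simp
  | insert x T hxT ih =>
    obtain ⟨hxQ, hTQ⟩ := Finset.insert_subset_iff.mp hT
    have marginal_le : f (insert x (T ∪ A)) - f (T ∪ A) ≤ f (insert x A) - f A := by
      by_cases hxA : x ∈ A
      · simp [hxA]
      · exact hf A (T ∪ A) Finset.subset_union_right (Finset.union_subset hTQ hA) x hxQ
          (by simp [hxT, hxA])
    calc f (insert x T ∪ A) - f A
        = (f (insert x (T ∪ A)) - f (T ∪ A)) + (f (T ∪ A) - f A) := by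
          rw [Finset.insert_union, sub_add_sub_cancel]
      _ ≤ (f (insert x A) - f A) + ∑ y ∈ T, (f (insert y A) - f A) :=
          add_le_add marginal_le (ih hTQ)
      _ = ∑ y ∈ insert x T, (f (insert y A) - f A) := by
          rw [Finset.sum_insert hxT]

theorem SubmodularOn.mul_sub_le_card_mul [Ring R] [PartialOrder R] [IsOrderedRing R]
    {f : Finset α → R} {Q A O : Finset α} {c g : R} (hsub : SubmodularOn f Q)
    (hmono : MonotoneOn f (Set.Iic Q)) (hA : A ⊆ Q) (hO : O ⊆ Q) (hc : 0 ≤ c)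
    (hg : ∀ x ∈ O, c * (f (insert x A) - f A) ≤ g) :
    c * (f O - f A) ≤ O.card * g := by
  have le_union : f O ≤ f (O ∪ A) :=
    hmono hO (Finset.union_subset hO hA) Finset.subset_union_left
  calc c * (f O - f A)
      ≤ c * (f (O ∪ A) - f A) := by gcongr
    _ ≤ c * ∑ x ∈ O, (f (insert x A) - f A) := by
        gcongr
        exact hsub.union_sub_le_sum hA hO
    _ = ∑ x ∈ O, c * (f (insert x A) - f A) := Finset.mul_sum ..
    _ ≤ O.card • g := Finset.sum_le_card_nsmul _ _ _ hg
    _ = O.card * g := nsmul_eq_mul ..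

theorem SubmodularOn.sub_le_one_sub_div_mul_sub [Field R] [LinearOrder R] [IsStrictOrderedRing R]
    {f : Finset α → R} {Q A B O : Finset α} {c : R} {k : ℕ} (hsub : SubmodularOn f Q)
    (hmono : MonotoneOn f (Set.Iic Q)) (hAB : A ⊆ B) (hB : B ⊆ Q) (hO : O ⊆ Q)
    (hk : 0 < k) (hOk : O.card ≤ k) (hc : 0 ≤ c)
    (hgain : ∀ x ∈ O, c * (f (insert x A) - f A) ≤ f B - f A) :
    f O - f B ≤ (1 - c / k) * (f O - f A) := by
  have hA : A ⊆ Q := hAB.trans hB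
  have gain_nonneg : 0 ≤ f B - f A := sub_nonneg.mpr (hmono hA hB hAB)
  have gap_le : c * (f O - f A) ≤ k * (f B - f A) :=
    (hsub.mul_sub_le_card_mul hmono hA hO hc hgain).trans (by gcongr)
  have progress : c / k * (f O - f A) ≤ f B - f A := by
    rwa [div_mul_eq_mul_div, div_le_iff₀' (Nat.cast_pos.mpr hk)]
  linarith

theorem IsApproxGreedy.one_sub_pow_mul_le {f : Finset α → ℝ} {Q O : Finset α} {c : ℝ} {k n : ℕ}
    {S : ℕ → Finset α} (hS : IsApproxGreedy f Q c n S) (hsub : SubmodularOn f Q)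
    (hmono : MonotoneOn f (Set.Iic Q)) (hO : O ⊆ Q) (hk : 0 < k) (hOk : O.card ≤ k)
    (hc : 0 ≤ c) (hck : c ≤ k) :
    (1 - (1 - c / k) ^ n) * (f O - f (S 0)) ≤ f (S n) - f (S 0) := by
  have ratio_nonneg : 0 ≤ 1 - c / k := sub_nonneg.mpr (div_le_one_of_le₀ hck k.cast_nonneg)
  have gap_le : f O - f (S n) ≤ (1 - c / k) ^ n * (f O - f (S 0)) :=
    le_geom (u := fun i ↦ f O - f (S i)) ratio_nonneg n fun i hi ↦
      hsub.sub_le_one_sub_div_mul_sub hmono (hS.subset_succ i hi) (hS.subset_ground (i + 1) hi)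
        hO hk hOk hc fun x hx ↦ hS.mul_gain_le i hi x (hO hx)
  linarith

theorem IsApproxGreedy.of_insert {f : Finset α → ℝ} {Q : Finset α} {c : ℝ} {n : ℕ}
    {S : ℕ → Finset α} {e : ℕ → α} (hS0 : S 0 ⊆ Q)
    (hstep : ∀ i < n, e (i + 1) ∈ Q ∧ S (i + 1) = insert (e (i + 1)) (S i) ∧
      ∀ x ∈ Q, c * (f (insert x (S i)) - f (S i)) ≤ f (S (i + 1)) - f (S i)) :
    IsApproxGreedy f Q c n S where
  subset_succ i hi := by
    rw [(hstep i hi).2.1]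
    exact Finset.subset_insert _ _
  subset_ground i hi := by
    induction i with
    | zero => exact hS0
    | succ i ih =>
      obtain ⟨he, hSi, -⟩ := hstep i hi
      rw [hSi]
      exact Finset.insert_subset he (ih (Nat.le_of_succ_le hi))
  mul_gain_le i hi := (hstep i hi).2.2

theorem stmt4_general {f : Finset α → ℝ} {Q O : Finset α} {ε : ℝ} {k : ℕ} {S : ℕ → Finset α}
    (hmono : MonotoneOn f (Set.Iic Q)) (hsub : SubmodularOn f Q) (hε0 : 0 ≤ ε) (hε1 : ε ≤ 1)
    (hk : 1 ≤ k) (hO : O ⊆ Q) (hOk : O.card ≤ k) (hS0 : S 0 = ∅)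
    (hS : IsApproxGreedy f Q (1 - ε) k S) :
    (1 - (1 - (1 - ε) / k) ^ k) * (f O - f ∅) ≤ f (S k) - f ∅ ∧
      (1 - 1 / Real.exp 1 - ε) * (f O - f ∅) ≤
        (1 - (1 - (1 - ε) / k) ^ k) * (f O - f ∅) := by
  constructor
  · have one_sub_le : 1 - ε ≤ k := (sub_le_self 1 hε0).trans (Nat.one_le_cast.mpr hk)
    simpa only [hS0] using
      hS.one_sub_pow_mul_le hsub hmono hO hk hOk (sub_nonneg.mpr hε1) one_sub_le
  · have gain_nonneg : 0 ≤ f O - f ∅ :=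
      sub_nonneg.mpr (hmono (Finset.empty_subset Q) hO (Finset.empty_subset O))
    exact mul_le_mul_of_nonneg_right (one_sub_inv_exp_sub_le_one_sub_pow hε0 hε1 hk) gain_nonneg

end Submodular

theorem stmt4 {α : Type*} [DecidableEq α] (Q : Finset α) (f : Finset α → ℝ)
    (hmono : ∀ A B : Finset α, A ⊆ B → B ⊆ Q → f A ≤ f B)
    (hsub : ∀ A B : Finset α, A ⊆ B → B ⊆ Q → ∀ x ∈ Q, x ∉ B →
      f (insert x B) - f B ≤ f (insert x A) - f A)
    (ε : ℝ) (hε0 : 0 < ε) (hε : ε ≤ 1 / 2) (k : ℕ) (hk : 1 ≤ k)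
    (O : Finset α) (hOQ : O ⊆ Q) (hOk : O.card ≤ k)
    (S : ℕ → Finset α) (e : ℕ → α) (hS0 : S 0 = ∅)
    (hstep : ∀ i < k, e (i + 1) ∈ Q ∧ S (i + 1) = insert (e (i + 1)) (S i) ∧
      ∀ e' ∈ Q, (1 - ε) * (f (insert e' (S i)) - f (S i)) ≤ f (S (i + 1)) - f (S i)) :
    (1 - (1 - (1 - ε) / k) ^ k) * (f O - f ∅) ≤ f (S k) - f ∅ ∧
      (1 - 1 / Real.exp 1 - ε) * (f O - f ∅) ≤
        (1 - (1 - (1 - ε) / k) ^ k) * (f O - f ∅) :=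
  stmt4_general (fun A _ B hB hAB ↦ hmono A B hAB hB) hsub hε0.le (by linarith) hk hOQ hOk hS0
    (IsApproxGreedy.of_insert (by simp [hS0]) hstep)
end

section
/- Let S_n be the star with central vertex r and leaves V' (|V'| = n), and let 𝒫 = {p_1,…,p_t} be a set of vertex-disjoint simple paths contained in V' that together cover all of V', where p_i has l_i ≥ 0 edges (so Σ_{i=1}^t (l_i + 1) = n). Then T(S_n + 𝒫) = ∏_{i=1}^{t} T(F_{l_i+1}) = ∏_{i=1}^{t} (1/√5) · ( ((3+√5)/2)^{l_i+1} − ((3−√5)/2)^{l_i+1} ), where S_n + 𝒫 is the unweighted graph obtained by adding all edges of the paths in 𝒫 to S_n. -/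
open Matrix

/-- The star graph `S_n`: the central vertex is `Fin.last n`, joined to the `n`
leaves `0, …, n-1` by unit-weight edges. -/
def starW (n : ℕ) : Fin (n + 1) → Fin (n + 1) → ℝ :=
  fun i j => if i ≠ j ∧ (i = Fin.last n ∨ j = Fin.last n) then 1 else 0

/-- The fan graph `F_n`: the star `S_n` plus a path of `n - 1` unit-weight edges
through the `n` leaves. -/
def fanW (n : ℕ) : Fin (n + 1) → Fin (n + 1) → ℝ :=
  fun i j => starW n i j +
    if ((i : ℕ) + 1 = (j : ℕ) ∧ j ≠ Fin.last n) ∨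
       ((j : ℕ) + 1 = (i : ℕ) ∧ i ≠ Fin.last n) then 1 else 0

/-- The star `S_n` plus, for each list `l ∈ Ps` of leaves, the path consisting of
unit-weight edges between consecutive vertices of `l`. -/
def starPlusPaths (n : ℕ) (Ps : List (List (Fin n))) : Fin (n + 1) → Fin (n + 1) → ℝ :=
  fun i j => starW n i j +
    if ∃ a b : Fin n, i = a.castSucc ∧ j = b.castSucc ∧
        ∃ l ∈ Ps, ((a, b) ∈ l.zip l.tail ∨ (b, a) ∈ l.zip l.tail) then 1 else 0

/-!
Deleting the hub of a cone leaves the matrix `1 + L`, where `L` is the Laplacian of the base, so the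
number of spanning trees of a cone is the number of rooted spanning forests of its base and is
multiplicative over disjoint unions. The leaves with the edges of the paths form a disjoint union
of path graphs. For a single path `1 + L` is tridiagonal, and expanding its determinant gives the
recurrence `u (m + 2) = 3 * u (m + 1) - u m` of every other Fibonacci number; Binet's formula
finishes the proof.
-/

section Tridiagonal

variable {R : Type*} [CommRing R]

/-- The tridiagonal `m × m` matrix with diagonal entries `a i`, entries `b i` at `(i, i + 1)` and
`c i` at `(i + 1, i)`. The sequences do not depend on `m`, so that leading principal submatrices
are again of this form. -/
def tridiagonal (a b c : ℕ → R) (m : ℕ) : Matrix (Fin m) (Fin m) R :=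
  of fun i j =>
    if (i : ℕ) = j then a i
    else if (i : ℕ) + 1 = j then b i
    else if (j : ℕ) + 1 = i then c j
    else 0

lemma tridiagonal_congr {a a' b c : ℕ → R} {m : ℕ} (h : ∀ i < m, a i = a' i) :
    tridiagonal a b c m = tridiagonal a' b c m := by
  ext i j
  simp only [tridiagonal, of_apply, h i i.isLt]

lemma det_tridiagonal_minor (a b c : ℕ → R) (m : ℕ) :
    ((tridiagonal a b c (m + 2)).submatrix (Fin.last (m + 1)).succAbove
      (Fin.last m).castSucc.succAbove).det = b m * (tridiagonal a b c m).det := by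
  set M := (tridiagonal a b c (m + 2)).submatrix (Fin.last (m + 1)).succAbove
    (Fin.last m).castSucc.succAbove with hM
  have last_column (i : Fin m) : M i.castSucc (Fin.last m) = 0 := by
    simp only [hM, tridiagonal, submatrix_apply, of_apply, Fin.succAbove_last,
      Fin.succAbove_castSucc_self, Fin.val_succ, Fin.val_castSucc, Fin.val_last]
    grind
  have corner : M (Fin.last m) (Fin.last m) = b m := by
    simp [hM, tridiagonal]
  have minor : M.submatrix Fin.castSucc Fin.castSucc = tridiagonal a b c m := by
    have (j : Fin m) : (Fin.last m).castSucc.succAbove j.castSucc = j.castSucc.castSucc :=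
      Fin.succAbove_of_castSucc_lt _ _ (by simp [Fin.lt_def])
    ext i j
    simp [hM, tridiagonal, this]
  rw [det_succ_column M (Fin.last m), Fin.sum_univ_castSucc]
  simp [last_column, corner, minor]

theorem det_tridiagonal_add_two (a b c : ℕ → R) (m : ℕ) :
    (tridiagonal a b c (m + 2)).det =
      a (m + 1) * (tridiagonal a b c (m + 1)).det - b m * c m * (tridiagonal a b c m).det := by
  set M := tridiagonal a b c (m + 2) with hM
  have last_row (j : Fin m) : M (Fin.last (m + 1)) j.castSucc.castSucc = 0 := by
    simp only [hM, tridiagonal, of_apply, Fin.val_castSucc, Fin.val_last]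
    grind
  have last_row_subdiag : M (Fin.last (m + 1)) (Fin.last m).castSucc = c m := by
    simp only [hM, tridiagonal, of_apply, Fin.val_castSucc, Fin.val_last]
    grind
  have corner : M (Fin.last (m + 1)) (Fin.last (m + 1)) = a (m + 1) := by
    simp [hM, tridiagonal]
  rw [det_succ_row M (Fin.last (m + 1)), Fin.sum_univ_castSucc, Fin.sum_univ_castSucc,
    det_tridiagonal_minor]
  have minor : M.submatrix Fin.castSucc Fin.castSucc = tridiagonal a b c (m + 1) := rfl
  simp only [last_row, last_row_subdiag, corner, minor, Fin.succAbove_last, Fin.val_castSucc,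
    Fin.val_last, mul_zero, zero_mul, Finset.sum_const_zero, zero_add,
    Even.neg_one_pow ⟨m + 1, rfl⟩, Odd.neg_one_pow odd_add_one_self]
  ring

lemma cast_fib_add_three (n : ℕ) : (Nat.fib (n + 3) : R) = 2 * Nat.fib (n + 2) - Nat.fib n := by
  push_cast [Nat.fib_add_two]
  ring

lemma cast_fib_add_four (n : ℕ) : (Nat.fib (n + 4) : R) = 3 * Nat.fib (n + 2) - Nat.fib n := by
  push_cast [Nat.fib_add_two]
  ring

lemma det_tridiagonal_two_three (m : ℕ) :
    (tridiagonal (fun i => if i = 0 then 2 else 3) (-1) (-1) m : Matrix _ _ R).det =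
      Nat.fib (2 * m + 1) := by
  induction m using Nat.twoStepInduction with
  | zero => simp
  | one => simp [tridiagonal, Nat.fib_add_two]
  | more m ih₀ ih₁ =>
    have fib_rec : (Nat.fib (2 * (m + 2) + 1) : R) =
        3 * Nat.fib (2 * (m + 1) + 1) - Nat.fib (2 * m + 1) := cast_fib_add_four (2 * m + 1)
    rw [det_tridiagonal_add_two, ih₀, ih₁, if_neg m.succ_ne_zero, Pi.neg_apply, Pi.one_apply]
    linear_combination -fib_rec

end Tridiagonal

section Laplacian

variable {V U : Type*} [Fintype V] [DecidableEq V] [Fintype U] [DecidableEq U]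

lemma lapG_submatrix_equiv (W : Matrix V V ℝ) (e : U ≃ V) :
    lapG (W.submatrix e e) = (lapG W).submatrix e e := by
  ext i j
  simp [lapG, e.sum_comp (W (e i))]

lemma lapG_submatrix_castSucc {n : ℕ} (W : Fin (n + 1) → Fin (n + 1) → ℝ) :
    (lapG W).submatrix Fin.castSucc Fin.castSucc =
      diagonal (fun i => W i.castSucc (Fin.last n)) +
        lapG ((of W).submatrix Fin.castSucc Fin.castSucc) := by
  ext i j
  by_cases h : i = j <;> simp [lapG, h, Fin.sum_univ_castSucc, add_comm]

variable {ι : Type*} [Fintype ι] [DecidableEq ι] {β : ι → Type*} [∀ i, Fintype (β i)]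
  [∀ i, DecidableEq (β i)]

lemma lapG_blockDiagonal' (W : ∀ i, Matrix (β i) (β i) ℝ) :
    lapG (blockDiagonal' W) = blockDiagonal' fun i => lapG (W i) := by
  have row_sum (i : ι) (a : β i) : ∑ y, blockDiagonal' W ⟨i, a⟩ y = ∑ b, W i a b := by
    rw [Fintype.sum_sigma, Finset.sum_eq_single_of_mem i (Finset.mem_univ i)]
    · simp only [blockDiagonal'_apply_eq]
    · exact fun j _ hj => Finset.sum_eq_zero fun b _ => blockDiagonal'_apply_ne W a b hj.symm
  ext ⟨i, a⟩ ⟨j, b⟩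
  by_cases hij : i = j
  · subst hij
    simp [lapG, row_sum, blockDiagonal'_apply_eq]
  · simp [lapG, blockDiagonal'_apply_ne _ _ _ hij, hij]

theorem det_blockDiagonal' {R : Type*} [CommRing R] (M : ∀ i, Matrix (β i) (β i) R) :
    (blockDiagonal' M).det = ∏ i, (M i).det := by
  have triangular : (blockDiagonal' M).BlockTriangular
      fun x : Σ i, β i => Fintype.equivFin ι x.1 := by
    rintro ⟨i, a⟩ ⟨j, b⟩ hij
    exact blockDiagonal'_apply_ne M a b (by rintro rfl; exact lt_irrefl _ hij)
  rw [triangular.det_fintype, ← (Fintype.equivFin ι).prod_comp]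
  refine Finset.prod_congr rfl fun i _ => ?_
  let e : β i ≃ {x : Σ i, β i // Fintype.equivFin ι x.1 = Fintype.equivFin ι i} :=
    (Equiv.sigmaSubtype i).symm.trans
      (Equiv.subtypeEquivRight fun _ => (Fintype.equivFin ι).apply_eq_iff_eq.symm)
  rw [← det_submatrix_equiv_self e]
  congr 1
  ext a b
  exact blockDiagonal'_apply_eq M i a b

/-- The weighted number of rooted spanning forests of a weighted graph on `V`; by the matrix-tree
theorem it counts the spanning trees of the cone over the graph, whose hub is joined to all of `V`
by unit-weight edges. -/
def rootedForests (W : Matrix V V ℝ) : ℝ :=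
  (1 + lapG W).det

lemma nst_eq_rootedForests {n : ℕ} {W : Fin (n + 1) → Fin (n + 1) → ℝ}
    (hW : ∀ i : Fin n, W i.castSucc (Fin.last n) = 1) :
    nst W = rootedForests ((of W).submatrix Fin.castSucc Fin.castSucc) := by
  simp only [nst, rootedForests, lapG_submatrix_castSucc, hW, diagonal_one]

lemma rootedForests_submatrix_equiv (W : Matrix V V ℝ) (e : U ≃ V) :
    rootedForests (W.submatrix e e) = rootedForests W := by
  rw [rootedForests, lapG_submatrix_equiv, ← submatrix_one_equiv e]
  exact det_submatrix_equiv_self e (1 + lapG W)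

theorem rootedForests_blockDiagonal' (W : ∀ i, Matrix (β i) (β i) ℝ) :
    rootedForests (blockDiagonal' W) = ∏ i, rootedForests (W i) := by
  rw [rootedForests, lapG_blockDiagonal', ← blockDiagonal'_one, ← blockDiagonal'_add,
    det_blockDiagonal']
  rfl

end Laplacian

section Path

/-- The weight function of the path graph `0 — 1 — ⋯ — (m - 1)`, with unit-weight edges. -/
def pathW (m : ℕ) : Matrix (Fin m) (Fin m) ℝ :=
  of fun i j => if (i : ℕ) + 1 = j ∨ (j : ℕ) + 1 = i then 1 else 0

lemma nst_fanW_eq_rootedForests (n : ℕ) : nst (fanW n) = rootedForests (pathW n) := by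
  rw [nst_eq_rootedForests fun i => by simp [fanW, starW, show n + 1 ≠ i by omega]]
  congr 1
  ext i j
  simp [fanW, starW, pathW]

lemma sum_pathW {m : ℕ} (i : Fin m) :
    ∑ j, pathW m i j = (if 0 < (i : ℕ) then 1 else 0) + if (i : ℕ) + 1 < m then 1 else 0 := by
  obtain ⟨i, hi⟩ := i
  have split (j : Fin m) : pathW m ⟨i, hi⟩ j =
      (if (j : ℕ) + 1 = i then 1 else 0) + if i + 1 = j then 1 else 0 := by
    simp only [pathW, of_apply]
    grind
  simp only [split, Finset.sum_add_distrib]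
  rw [Fin.sum_univ_eq_sum_range fun j => if j + 1 = i then (1 : ℝ) else 0,
    Fin.sum_univ_eq_sum_range fun j => if i + 1 = j then (1 : ℝ) else 0]
  cases i with
  | zero => simp
  | succ i => simp [i.lt_succ_self.trans hi]

lemma one_add_lapG_pathW (m : ℕ) :
    1 + lapG (pathW m) = tridiagonal
      (fun i => 1 + ((if 0 < i then 1 else 0) + if i + 1 < m then 1 else 0)) (-1) (-1) m := by
  ext i j
  by_cases h : i = j
  · subst h
    simp only [lapG, tridiagonal, Matrix.add_apply, one_apply_eq, of_apply, if_true, sum_pathW]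
  · simp only [lapG, tridiagonal, pathW, Matrix.add_apply, one_apply_ne h, of_apply, if_neg h,
      Fin.val_inj, zero_add, Pi.neg_apply, Pi.one_apply]
    grind

theorem rootedForests_pathW_succ (m : ℕ) : rootedForests (pathW (m + 1)) = Nat.fib (2 * m + 2) := by
  rw [rootedForests, one_add_lapG_pathW]
  cases m with
  | zero => simp [tridiagonal]
  | succ m =>
    have interior {k : ℕ} (hk : k ≤ m + 1) : tridiagonal (fun i => 1 + ((if 0 < i then 1 else 0) +
        if i + 1 < m + 1 + 1 then 1 else 0)) (-1) (-1) k =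
          tridiagonal (fun i => if i = 0 then (2 : ℝ) else 3) (-1) (-1) k :=
      tridiagonal_congr fun i hi => by grind
    have fib_rec : (Nat.fib (2 * (m + 1) + 2) : ℝ) =
        2 * Nat.fib (2 * (m + 1) + 1) - Nat.fib (2 * m + 1) := cast_fib_add_three (2 * m + 1)
    rw [det_tridiagonal_add_two, interior le_rfl, interior m.le_succ, det_tridiagonal_two_three,
      det_tridiagonal_two_three, if_pos m.succ_pos, if_neg (lt_irrefl _), Pi.neg_apply,
      Pi.one_apply]
    linear_combination -fib_rec

lemma nst_fanW {n : ℕ} (hn : n ≠ 0) : nst (fanW n) = Nat.fib (2 * n) := by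
  obtain ⟨m, rfl⟩ := Nat.exists_eq_succ_of_ne_zero hn
  exact (nst_fanW_eq_rootedForests _).trans (rootedForests_pathW_succ m)

lemma coe_fib_two_mul (n : ℕ) :
    (Nat.fib (2 * n) : ℝ) =
      1 / √5 * (((3 + √5) / 2) ^ n - ((3 - √5) / 2) ^ n) := by
  have sqrt_sq : √5 ^ 2 = 5 := Real.sq_sqrt (by norm_num)
  have golden_sq : Real.goldenRatio ^ 2 = (3 + √5) / 2 := by
    rw [Real.goldenRatio]; linear_combination sqrt_sq / 4
  have conj_sq : Real.goldenConj ^ 2 = (3 - √5) / 2 := by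
    rw [Real.goldenConj]; linear_combination sqrt_sq / 4
  rw [Real.coe_fib_eq, pow_mul, pow_mul, golden_sq, conj_sq, div_eq_inv_mul, one_div]

end Path

section DisjointPaths

variable {α : Type*} {Ps : List (List α)}

lemma eq_of_mem_getElem_of_pairwise_disjoint (hdisj : Ps.Pairwise List.Disjoint)
    {i j : Fin Ps.length} {x : α} (hi : x ∈ Ps[i]) (hj : x ∈ Ps[j]) : i = j := by
  rw [List.pairwise_iff_get] at hdisj
  rcases lt_trichotomy i j with h | h | h
  · exact (hdisj i j h hi hj).elim
  · exact h
  · exact (hdisj j i h hj hi).elim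

lemma bijective_sigma_getElem (hnodup : ∀ l ∈ Ps, l.Nodup) (hdisj : Ps.Pairwise List.Disjoint)
    (hcover : ∀ v, ∃ l ∈ Ps, v ∈ l) :
    Function.Bijective fun x : Σ i : Fin Ps.length, Fin Ps[i].length => Ps[x.1][x.2] := by
  constructor
  · rintro ⟨i, a⟩ ⟨j, b⟩ (h : Ps[i][a] = Ps[j][b])
    obtain rfl : i = j := eq_of_mem_getElem_of_pairwise_disjoint hdisj
      (List.getElem_mem a.isLt) (h ▸ List.getElem_mem b.isLt)
    exact congrArg _ (List.nodup_iff_injective_get.1 (hnodup _ (List.getElem_mem i.isLt)) h)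
  · intro v
    obtain ⟨l, hl, hv⟩ := hcover v
    obtain ⟨i, rfl⟩ := List.mem_iff_get.1 hl
    obtain ⟨a, rfl⟩ := List.mem_iff_get.1 hv
    exact ⟨⟨i, a⟩, rfl⟩

lemma getElem_mem_consecutivePairs_iff {l : List α} (hl : l.Nodup) {i j : Fin l.length} :
    (l[i], l[j]) ∈ l.consecutivePairs ↔ (i : ℕ) + 1 = j := by
  rw [List.mem_iff_getElem]
  constructor
  · rintro ⟨k, hk, h⟩
    simp only [List.getElem_zip, List.getElem_tail, Prod.mk.injEq] at h
    have hi := (hl.getElem_inj_iff).1 h.1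
    have hj := (hl.getElem_inj_iff).1 h.2
    omega
  · intro h
    exact ⟨i, by grind, by simp [h]⟩

lemma mem_of_mem_consecutivePairs {l : List α} {a b : α} (h : (a, b) ∈ l.consecutivePairs) :
    a ∈ l ∧ b ∈ l :=
  ⟨(List.of_mem_zip h).1, List.mem_of_mem_tail (List.of_mem_zip h).2⟩

variable [DecidableEq α]

/-- The weight function on `α` of the union of the paths `l ∈ Ps`: consecutive vertices of each
`l` are joined by a unit-weight edge. -/
def pathsW (Ps : List (List α)) : Matrix α α ℝ :=
  of fun a b => if ∃ l ∈ Ps, (a, b) ∈ l.consecutivePairs ∨ (b, a) ∈ l.consecutivePairs then 1 else 0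

lemma nst_starPlusPaths_eq_rootedForests (n : ℕ) (Ps : List (List (Fin n))) :
    nst (starPlusPaths n Ps) = rootedForests (pathsW Ps) := by
  rw [nst_eq_rootedForests fun i => by simp [starPlusPaths, starW, (Fin.castSucc_ne_last _).symm]]
  congr 1
  ext i j
  simp [starPlusPaths, starW, pathsW]

lemma pathsW_getElem (hnodup : ∀ l ∈ Ps, l.Nodup) (hdisj : Ps.Pairwise List.Disjoint)
    (x y : Σ i : Fin Ps.length, Fin Ps[i].length) :
    pathsW Ps Ps[x.1][x.2] Ps[y.1][y.2] =
      blockDiagonal' (fun i : Fin Ps.length => pathW Ps[i].length) x y := by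
  obtain ⟨i, a⟩ := x
  obtain ⟨j, b⟩ := y
  have same_path {l : List α} (hl : l ∈ Ps) (h : (Ps[i][a], Ps[j][b]) ∈ l.consecutivePairs ∨
      (Ps[j][b], Ps[i][a]) ∈ l.consecutivePairs) : l = Ps[i] ∧ i = j := by
    obtain ⟨k, rfl⟩ := List.mem_iff_get.1 hl
    have hmem : Ps[i][a] ∈ Ps[k] ∧ Ps[j][b] ∈ Ps[k] :=
      h.elim mem_of_mem_consecutivePairs fun h => (mem_of_mem_consecutivePairs h).symm
    obtain rfl := eq_of_mem_getElem_of_pairwise_disjoint hdisj (List.getElem_mem a.isLt) hmem.1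
    exact ⟨rfl,
      (eq_of_mem_getElem_of_pairwise_disjoint hdisj (List.getElem_mem b.isLt) hmem.2).symm⟩
  by_cases hij : i = j
  · subst hij
    have hi : Ps[i].Nodup := hnodup _ (List.getElem_mem i.isLt)
    rw [blockDiagonal'_apply_eq, pathsW, pathW, of_apply]
    refine if_congr ?_ rfl rfl
    rw [← getElem_mem_consecutivePairs_iff hi, ← getElem_mem_consecutivePairs_iff hi]
    exact ⟨fun ⟨l, hl, h⟩ => (same_path hl h).1 ▸ h, fun h => ⟨_, List.getElem_mem i.isLt, h⟩⟩
  · rw [blockDiagonal'_apply_ne _ _ _ hij]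
    exact if_neg fun ⟨l, hl, h⟩ => hij (same_path hl h).2

theorem rootedForests_pathsW [Fintype α] (hnodup : ∀ l ∈ Ps, l.Nodup)
    (hdisj : Ps.Pairwise List.Disjoint) (hcover : ∀ v, ∃ l ∈ Ps, v ∈ l) :
    rootedForests (pathsW Ps) = (Ps.map fun l => rootedForests (pathW l.length)).prod := by
  let e := Equiv.ofBijective _ (bijective_sigma_getElem hnodup hdisj hcover)
  calc rootedForests (pathsW Ps)
      = rootedForests ((pathsW Ps).submatrix e e) := (rootedForests_submatrix_equiv _ e).symm
    _ = rootedForests (blockDiagonal' fun i : Fin Ps.length => pathW Ps[i].length) :=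
      congrArg _ (Matrix.ext (pathsW_getElem hnodup hdisj))
    _ = ∏ i : Fin Ps.length, rootedForests (pathW Ps[i].length) := rootedForests_blockDiagonal' _
    _ = (Ps.map fun l => rootedForests (pathW l.length)).prod :=
      Fin.prod_univ_fun_getElem Ps fun l => rootedForests (pathW l.length)

end DisjointPaths

theorem stmt6 (n : ℕ) (Ps : List (List (Fin n)))
    (hne : ∀ l ∈ Ps, l ≠ []) (hnodup : ∀ l ∈ Ps, l.Nodup)
    (hdisj : Ps.Pairwise (fun l₁ l₂ => ∀ x ∈ l₁, x ∉ l₂))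
    (hcover : ∀ v : Fin n, ∃ l ∈ Ps, v ∈ l) :
    nst (starPlusPaths n Ps) = (Ps.map (fun l => nst (fanW l.length))).prod ∧
      nst (starPlusPaths n Ps) =
        (Ps.map (fun l => (1 / Real.sqrt 5) *
          (((3 + Real.sqrt 5) / 2) ^ l.length -
            ((3 - Real.sqrt 5) / 2) ^ l.length))).prod := by
  have nst_eq_prod : nst (starPlusPaths n Ps) =
      (Ps.map (fun l => nst (fanW l.length))).prod := by
    simp only [nst_starPlusPaths_eq_rootedForests, nst_fanW_eq_rootedForests]
    exact rootedForests_pathsW hnodup hdisj hcover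
  refine ⟨nst_eq_prod, nst_eq_prod.trans (congrArg _ (List.map_congr_left fun l hl => ?_))⟩
  rw [nst_fanW (List.length_pos_of_ne_nil (hne l hl)).ne', coe_fib_two_mul]
end

section
/- Let H = (V, E) be an unweighted graph equal to a star S_n (with n leaves V') plus a subgraph H[V'] = (V', E') supported on the leaves, with n ≥ 2. For any edge set P ⊆ E' with |P| = n − 1 such that P does not form a Hamiltonian path on V', it holds that T(S_n + P) < T(F_n), where F_n = S_n plus a Hamiltonian path on V'. -/
open Matrix

/-- The star `S_n` plus the set `P` of unit-weight edges between leaves. -/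
def starPlusEdges (n : ℕ) (P : Finset (Sym2 (Fin n))) : Fin (n + 1) → Fin (n + 1) → ℝ :=
  fun i j => starW n i j +
    if ∃ a b : Fin n, i = a.castSucc ∧ j = b.castSucc ∧ s(a, b) ∈ P then 1 else 0

/-- `P` is (exactly) the edge set of a Hamiltonian path on the `n` leaves. -/
def IsHamPathEdges (n : ℕ) (P : Finset (Sym2 (Fin n))) : Prop :=
  ∃ l : List (Fin n), l.Nodup ∧ (∀ v : Fin n, v ∈ l) ∧
    ∀ e, e ∈ P ↔ ∃ p ∈ l.zip l.tail, e = s(p.1, p.2)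

/-!
The spanning trees of the cone over a graph `G` with Laplacian `L` are the rooted spanning forests
of `G`, so their number is `det (1 + L)`, and inequalities between them are read off from the Green
matrix `K = (1 + L)⁻¹`. For a path on `k` vertices the number is the Fibonacci number `F_{2k}`, and
the claim is that among the graphs with `k` vertices and `k - 1` edges only the path attains
`F_{2k}`. This is an induction on `k` for the pair of counts of all forests and of forests with a
given root `u`. If `u` is a leaf, deleting its edge reproduces the Fibonacci recursion. If `u` has
degree at least `2`, it is a root in at most half of the forests. If `u` is isolated, the other
`k - 1` vertices carry as many edges as vertices, and some edge can be deleted at the cost of a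
factor of at most `√5`: either its ends have degrees at least `3` and `2`, or the graph is
`2`-regular. Since `√5 F_{2a} F_{2b} < F_{2(a+b)}`, the path wins in that case.
-/

theorem adj_of_neighborFinset_eq_singleton {V : Type*} {G : SimpleGraph V} {u w : V}
    [Fintype (G.neighborSet u)] (hu : G.neighborFinset u = {w}) : G.Adj u w := by
  rw [← G.mem_neighborFinset, hu]
  exact Finset.mem_singleton_self w

theorem degree_eq_two_of_card_edgeFinset_eq {V : Type*} [Fintype V] {G : SimpleGraph V}
    [DecidableRel G.Adj] {S : Finset V} (hS : ∀ v ∉ S, G.degree v = 0)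
    (hcard : G.edgeFinset.card = S.card) (hle : ∀ v, G.degree v ≤ 2) {v : V} (hv : v ∈ S) :
    G.degree v = 2 := by
  have hsum : ∑ v ∈ S, G.degree v = ∑ v ∈ S, 2 := by
    rw [Finset.sum_subset S.subset_univ fun v _ => hS v, G.sum_degrees_eq_twice_card_edges, hcard,
      Finset.sum_const, smul_eq_mul, mul_comm]
  exact (Finset.sum_eq_sum_iff_of_le fun v _ => hle v).1 hsum v hv

theorem mem_of_adj_of_degree_eq_zero {V : Type*} [Fintype V] {G : SimpleGraph V}
    [DecidableRel G.Adj] {S : Finset V} (hS : ∀ v ∉ S, G.degree v = 0)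
    {u v : V} (huv : G.Adj u v) : u ∈ S := by
  by_contra hu
  exact ((G.degree_pos_iff_exists_adj u).2 ⟨v, huv⟩).ne' (hS u hu)

theorem exists_degree_le_one_of_card_edgeFinset_lt {V : Type*} [Fintype V] {G : SimpleGraph V}
    [DecidableRel G.Adj] {S : Finset V} (hS : ∀ v ∉ S, G.degree v = 0)
    (hcard : G.edgeFinset.card < S.card) : ∃ u ∈ S, G.degree u ≤ 1 := by
  by_contra! h
  have hsum : S.card • 2 ≤ ∑ v ∈ S, G.degree v := Finset.card_nsmul_le_sum _ _ _ h
  rw [Finset.sum_subset S.subset_univ fun v _ => hS v, G.sum_degrees_eq_twice_card_edges,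
    smul_eq_mul] at hsum
  lia

/-- Let every vertex of degree at least `3` send one unit to each of its neighbours, which are
leaves. Then no vertex keeps more than `2`, and a sender keeps `0`, although the average is `2`. -/
theorem degree_le_two_of_card_edgeFinset_eq {V : Type*} [Fintype V] {G : SimpleGraph V}
    [DecidableRel G.Adj] {S : Finset V} (hS : ∀ v ∉ S, G.degree v = 0)
    (hcard : G.edgeFinset.card = S.card)
    (hadj : ∀ u v, G.Adj u v → 3 ≤ G.degree u → G.degree v ≤ 1) (v : V) : G.degree v ≤ 2 := by
  classical
  set big : Finset V := {u | 3 ≤ G.degree u} with hbig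
  have hmem (v : V) : v ∈ big ↔ 3 ≤ G.degree v := by simp [hbig]
  have hbound (v : V) :
      G.degree v + (big.bipartiteAbove G.Adj v).card + (if v ∈ big then 2 else 0) ≤
        (if v ∈ S then 2 else 0) + if v ∈ big then G.degree v else 0 := by
    have hle : (big.bipartiteAbove G.Adj v).card ≤ G.degree v :=
      Finset.card_le_card fun u hu => by simpa using (Finset.mem_filter.1 hu).2
    have hzero (hv : 2 ≤ G.degree v) : (big.bipartiteAbove G.Adj v).card = 0 := by
      refine Finset.card_eq_zero.2 (Finset.filter_eq_empty_iff.2 fun u hu hvu => ?_)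
      exact (hadj u v hvu.symm ((hmem u).1 hu)).not_gt hv
    have := hS v
    have := hmem v
    split_ifs <;> grind
  have hcount : ∑ v, (big.bipartiteAbove G.Adj v).card = ∑ v ∈ big, G.degree v := by
    rw [Finset.sum_card_bipartiteAbove_eq_sum_card_bipartiteBelow]
    refine Finset.sum_congr rfl fun v _ => ?_
    simp only [Finset.bipartiteBelow, ← G.card_neighborFinset_eq_degree,
      G.neighborFinset_eq_filter, G.adj_comm]
  have hsum := Finset.sum_le_sum fun v (_ : v ∈ Finset.univ) => hbound v
  simp only [Finset.sum_add_distrib, G.sum_degrees_eq_twice_card_edges, hcard, hcount,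
    Finset.sum_ite_mem, Finset.univ_inter, Finset.sum_const, smul_eq_mul] at hsum
  have hempty : big = ∅ := Finset.card_eq_zero.1 (by lia)
  by_contra! hv
  simpa [hempty] using (hmem v).2 hv

section Forests

variable {V : Type*} [Fintype V] [DecidableEq V] (G : SimpleGraph V) [DecidableRel G.Adj]

/-- The matrix `1 + L` of a graph with Laplacian `L`: the Laplacian of the cone over `G` with the
row and column of the apex removed. -/
def forestMatrix : Matrix V V ℝ := 1 + G.lapMatrix ℝ

/-- The number of rooted spanning forests of `G`, which are the spanning trees of the cone over
`G`, encoded by the matrix-tree theorem as a determinant. -/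
noncomputable def forestCount : ℝ := (forestMatrix G).det

/-- The Green matrix `(1 + L)⁻¹` of `G`. Its `(u, v)` entry is the probability that, in a uniform
rooted spanning forest of `G`, the vertex `v` is the root of the tree containing `u`. -/
noncomputable def green : Matrix V V ℝ := (forestMatrix G)⁻¹

/-- The number of rooted spanning forests of `G` in which `u` is a root. -/
noncomputable def rootedForestCount (u : V) : ℝ := forestCount G * green G u u

/-- The effective resistance between `u` and `v` in the cone over `G`. -/
noncomputable def resistance (u v : V) : ℝ := green G u u + green G v v - 2 * green G u v

theorem forestMatrix_mulVec_apply (x : V → ℝ) (i : V) :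
    (forestMatrix G *ᵥ x) i = x i + ∑ j ∈ G.neighborFinset i, (x i - x j) := by
  simp [forestMatrix, add_mulVec, SimpleGraph.lapMatrix_mulVec_apply, Finset.sum_sub_distrib]

theorem forestMatrix_isSymm : (forestMatrix G).IsSymm :=
  isSymm_one.add (G.isSymm_lapMatrix (R := ℝ))

theorem forestMatrix_posDef : (forestMatrix G).PosDef :=
  PosDef.one.add_posSemidef (G.posSemidef_lapMatrix ℝ)

theorem forestCount_pos : 0 < forestCount G := (forestMatrix_posDef G).det_pos

theorem forestMatrix_mul_green : forestMatrix G * green G = 1 :=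
  mul_nonsing_inv _ (forestCount_pos G).ne'.isUnit

theorem green_comm (u v : V) : green G u v = green G v u := by
  have h : (green G)ᵀ = green G := by rw [green, transpose_nonsing_inv, forestMatrix_isSymm]
  exact congrFun₂ h v u

theorem green_self_pos (u : V) : 0 < green G u u :=
  (forestMatrix_posDef G).inv.diag_pos

theorem forestMatrix_mulVec_green (v : V) :
    forestMatrix G *ᵥ (fun i => green G i v) = Pi.single v 1 := by
  ext i
  have h : (forestMatrix G * green G) i v = (1 : Matrix V V ℝ) i v := by
    rw [forestMatrix_mul_green]
  rwa [one_apply, ← Pi.single_apply] at h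

theorem degree_add_one_mul_green (i v : V) :
    (G.degree i + 1) * green G i v =
      (Pi.single v 1 : V → ℝ) i + ∑ j ∈ G.neighborFinset i, green G j v := by
  rw [← forestMatrix_mulVec_green G v, forestMatrix_mulVec_apply, Finset.sum_sub_distrib]
  simp only [Finset.sum_const, G.card_neighborFinset_eq_degree, nsmul_eq_mul]
  ring

variable {G}

/-- The minimum principle: at a negative minimum the averaging form of `1 + L` would be negative. -/
theorem nonneg_of_forestMatrix_mulVec {x : V → ℝ}
    (hx : ∀ i, x i < 0 → 0 ≤ (forestMatrix G *ᵥ x) i) (i : V) : 0 ≤ x i := by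
  by_contra! hi
  obtain ⟨m, -, hm⟩ := Finset.exists_min_image Finset.univ x ⟨i, Finset.mem_univ i⟩
  have hneg : x m < 0 := (hm i (Finset.mem_univ i)).trans_lt hi
  have hsum : ∑ j ∈ G.neighborFinset m, (x m - x j) ≤ 0 :=
    Finset.sum_nonpos fun j _ => sub_nonpos.2 (hm j (Finset.mem_univ j))
  have := hx m hneg
  rw [forestMatrix_mulVec_apply] at this
  linarith

variable (G)

theorem green_nonneg (u v : V) : 0 ≤ green G u v := by
  refine nonneg_of_forestMatrix_mulVec (G := G) (x := fun i => green G i v) (fun i _ => ?_) u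
  rw [forestMatrix_mulVec_green]
  exact (Pi.single_nonneg.2 zero_le_one : (0 : V → ℝ) ≤ Pi.single v 1) i

/-- `green G y u / green G u u` is the probability that the killed random walk from `y` hits `u`,
and passing through `u` is one way of reaching `v`. -/
theorem green_mul_green_le (y u v : V) :
    green G y u * green G u v ≤ green G y v * green G u u := by
  have hx := nonneg_of_forestMatrix_mulVec (G := G)
    (x := green G u u • (fun i => green G i v) - green G u v • fun i => green G i u) ?_ y
  · simp only [Pi.sub_apply, Pi.smul_apply, smul_eq_mul] at hx
    linarith
  intro i hi
  rw [mulVec_sub, mulVec_smul, mulVec_smul, forestMatrix_mulVec_green, forestMatrix_mulVec_green]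
  have hiu : i ≠ u := by
    rintro rfl
    simp [mul_comm] at hi
  have hv : (0 : V → ℝ) i ≤ (Pi.single v 1 : V → ℝ) i := Pi.single_nonneg.2 zero_le_one i
  simpa [hiu] using mul_nonneg (green_self_pos G u).le hv

/-- The comparison function `1 + e_u` is superharmonic away from `u`. -/
theorem two_mul_green_le {j u : V} (hj : j ≠ u) : 2 * green G j u ≤ green G u u := by
  have hx := nonneg_of_forestMatrix_mulVec (G := G)
    (x := green G u u • (1 + Pi.single u 1) - (2 : ℝ) • fun i => green G i u) ?_ j
  · simp [hj] at hx
    linarith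
  intro i hi
  have hiu : i ≠ u := by
    rintro rfl
    simp [mul_comm] at hi
    linarith
  have hadj : ∑ j ∈ G.neighborFinset i, (Pi.single u 1 : V → ℝ) j ≤ 1 := by
    simp only [Pi.single_apply, Finset.sum_ite_eq']
    split_ifs <;> norm_num
  have hone : 0 ≤ (forestMatrix G *ᵥ (1 + Pi.single u 1)) i := by
    rw [forestMatrix_mulVec_apply]
    simp only [Pi.add_apply, Pi.one_apply, Pi.single_eq_of_ne hiu, add_zero, sub_add_cancel_left,
      Finset.sum_neg_distrib]
    linarith
  rw [mulVec_sub, mulVec_smul, mulVec_smul, forestMatrix_mulVec_green]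
  simpa [hiu] using mul_nonneg (green_self_pos G u).le hone

theorem green_self_mul_degree_le (u : V) : green G u u * (1 + G.degree u / 2) ≤ 1 := by
  have hrow := degree_add_one_mul_green G u u
  have hsum : ∑ j ∈ G.neighborFinset u, green G j u ≤ G.degree u * (green G u u / 2) := by
    rw [← G.card_neighborFinset_eq_degree, ← nsmul_eq_mul]
    refine Finset.sum_le_card_nsmul _ _ _ fun j hj => ?_
    have hne : j ≠ u := by
      rintro rfl
      simp at hj
    linarith [two_mul_green_le G hne]
  rw [Pi.single_eq_same] at hrow
  linarith

section Deletion

theorem det_add_vecMulVec {m R : Type*} [Fintype m] [DecidableEq m] [CommRing R]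
    {A : Matrix m m R} (hA : IsUnit A.det) (x y : m → R) :
    (A + vecMulVec x y).det = A.det * (1 + y ⬝ᵥ A⁻¹ *ᵥ x) := by
  rw [vecMulVec_eq Unit, det_add_replicateCol_mul_replicateRow hA, Matrix.mul_assoc,
    ← replicateCol_mulVec, det_unique (n := Unit), Matrix.add_apply, one_apply_eq,
    replicateRow_mul_replicateCol_apply]

theorem dotProduct_green_mulVec_single_sub_single (u v : V) :
    (Pi.single u 1 - Pi.single v 1 : V → ℝ) ⬝ᵥ green G *ᵥ (Pi.single u 1 - Pi.single v 1) =
      resistance G u v := by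
  simp only [mulVec_sub, mulVec_single_one, sub_dotProduct, single_one_dotProduct, Pi.sub_apply,
    col_apply, resistance, green_comm G v u]
  ring

variable {G}

theorem forestMatrix_eq_deleteEdges_add {u v : V} (huv : G.Adj u v) :
    forestMatrix G = forestMatrix (G.deleteEdges {s(u, v)}) +
      vecMulVec (Pi.single u 1 - Pi.single v 1) (Pi.single u 1 - Pi.single v 1) := by
  have hadj (i j : V) : (if G.Adj i j then (1 : ℝ) else 0) =
      (if (G.deleteEdges {s(u, v)}).Adj i j then 1 else 0) +
        ((if i = u then if j = v then 1 else 0 else 0) +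
          if i = v then if j = u then 1 else 0 else 0) := by
    have hne := huv.ne
    simp only [SimpleGraph.deleteEdges_adj, Set.mem_singleton_iff, Sym2.eq_iff]
    grind [SimpleGraph.adj_comm]
  refine ext_of_mulVec_single fun k => funext fun i => ?_
  rw [add_mulVec, vecMulVec_mulVec, Pi.add_apply, forestMatrix_mulVec_apply,
    forestMatrix_mulVec_apply, add_assoc, add_right_inj]
  generalize (Pi.single k 1 : V → ℝ) = x
  have hsum (H : SimpleGraph V) [DecidableRel H.Adj] : ∑ j ∈ H.neighborFinset i, (x i - x j) =
      ∑ j, (if H.Adj i j then 1 else 0) * (x i - x j) := by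
    simp only [SimpleGraph.neighborFinset_eq_filter, Finset.sum_filter, boole_mul]
  simp only [hsum, hadj, add_mul, Finset.sum_add_distrib, add_right_inj]
  rw [Pi.smul_apply, op_smul_eq_smul, sub_dotProduct, single_one_dotProduct,
    single_one_dotProduct, Pi.sub_apply, Pi.single_apply, Pi.single_apply, smul_eq_mul]
  rcases eq_or_ne i u with rfl | hiu
  · simp [huv.ne]
  rcases eq_or_ne i v with rfl | hiv <;> simp [*]

theorem forestCount_eq_deleteEdges_mul {u v : V} (huv : G.Adj u v) :
    forestCount G = forestCount (G.deleteEdges {s(u, v)}) *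
      (1 + resistance (G.deleteEdges {s(u, v)}) u v) := by
  rw [forestCount, forestMatrix_eq_deleteEdges_add huv,
    det_add_vecMulVec (forestCount_pos _).ne'.isUnit]
  exact congrArg (fun r => _ * (1 + r)) (dotProduct_green_mulVec_single_sub_single _ u v)

theorem forestCount_deleteEdges {u v : V} (huv : G.Adj u v) :
    forestCount (G.deleteEdges {s(u, v)}) = forestCount G * (1 - resistance G u v) := by
  have h : forestMatrix (G.deleteEdges {s(u, v)}) = forestMatrix G +
      vecMulVec (-(Pi.single u 1 - Pi.single v 1)) (Pi.single u 1 - Pi.single v 1) := by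
    rw [neg_vecMulVec, forestMatrix_eq_deleteEdges_add huv, add_neg_cancel_right]
  rw [forestCount, h, det_add_vecMulVec (forestCount_pos _).ne'.isUnit, mulVec_neg, dotProduct_neg,
    ← sub_eq_add_neg]
  exact congrArg (fun r => _ * (1 - r)) (dotProduct_green_mulVec_single_sub_single G u v)

end Deletion

section Leaf

variable {G}

theorem green_self_of_neighborFinset_eq_empty {u : V} (hu : G.neighborFinset u = ∅) :
    green G u u = 1 := by
  have h := degree_add_one_mul_green G u u
  rw [hu, ← G.card_neighborFinset_eq_degree, hu] at h
  simpa using h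

theorem green_of_neighborFinset_eq_empty {u w : V} (hu : G.neighborFinset u = ∅) (hw : w ≠ u) :
    green G u w = 0 := by
  have h := degree_add_one_mul_green G u w
  rw [hu, ← G.card_neighborFinset_eq_degree, hu] at h
  simpa [hw.symm] using h

theorem resistance_eq_green_of_neighborFinset_eq_singleton {u w : V}
    (hu : G.neighborFinset u = {w}) : resistance G u w = green G u u := by
  have hwu : w ≠ u := by
    rintro rfl
    simpa using hu.ge (Finset.mem_singleton_self _)
  have hrow := degree_add_one_mul_green G u w
  rw [← G.card_neighborFinset_eq_degree, hu, Finset.card_singleton, Finset.sum_singleton,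
    Pi.single_eq_of_ne hwu.symm] at hrow
  rw [resistance]
  push_cast at hrow
  linarith

theorem neighborFinset_deleteEdges_of_eq_singleton {u w : V} (hu : G.neighborFinset u = {w}) :
    (G.deleteEdges {s(u, w)}).neighborFinset u = ∅ := by
  ext j
  have hj : G.Adj u j ↔ j = w := by rw [← G.mem_neighborFinset, hu, Finset.mem_singleton]
  simp +contextual [hj]

theorem forestCount_of_neighborFinset_eq_singleton {u w : V} (hu : G.neighborFinset u = {w}) :
    forestCount G = 2 * forestCount (G.deleteEdges {s(u, w)}) +
      rootedForestCount (G.deleteEdges {s(u, w)}) w := by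
  have huw := adj_of_neighborFinset_eq_singleton hu
  have hu' := neighborFinset_deleteEdges_of_eq_singleton hu
  rw [forestCount_eq_deleteEdges_mul huw, resistance, green_self_of_neighborFinset_eq_empty hu',
    green_of_neighborFinset_eq_empty hu' huw.ne', rootedForestCount]
  ring

theorem rootedForestCount_of_neighborFinset_eq_singleton {u w : V}
    (hu : G.neighborFinset u = {w}) :
    rootedForestCount G u = forestCount (G.deleteEdges {s(u, w)}) +
      rootedForestCount (G.deleteEdges {s(u, w)}) w := by
  have hdel := forestCount_deleteEdges (adj_of_neighborFinset_eq_singleton hu)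
  rw [resistance_eq_green_of_neighborFinset_eq_singleton hu] at hdel
  have hleaf := forestCount_of_neighborFinset_eq_singleton hu
  rw [rootedForestCount]
  linarith

end Leaf

section Regular

variable {G}

theorem exists_neighborFinset_eq_pair {u v : V} (hv : G.degree v = 2) (huv : G.Adj v u) :
    ∃ w, u ≠ w ∧ G.neighborFinset v = {u, w} := by
  obtain ⟨a, b, hab, hN⟩ := Finset.card_eq_two.1 hv
  have hu : u ∈ ({a, b} : Finset V) := hN ▸ (G.mem_neighborFinset v u).2 huv
  rcases Finset.mem_insert.1 hu with rfl | hu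
  · exact ⟨b, hab, hN⟩
  · rw [Finset.mem_singleton.1 hu]
    exact ⟨a, hab.symm, hN.trans (Finset.pair_comm a b)⟩

theorem three_mul_green {i u w : V} (hi : G.neighborFinset i = {u, w}) (huw : u ≠ w) (v : V) :
    3 * green G i v = (Pi.single v 1 : V → ℝ) i + (green G u v + green G w v) := by
  have hrow := degree_add_one_mul_green G i v
  rw [← G.card_neighborFinset_eq_degree, hi, Finset.card_pair huw, Finset.sum_pair huw] at hrow
  rw [← hrow]
  norm_num

/-- The minimal ratio `ρ` of `green G u v` to `green G v v` over all adjacent `u`, `v` satisfies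
`3 ρ ≥ 1 + ρ ^ 2`, whose smaller root is `(3 - √5) / 2`. -/
theorem le_green_of_adj (hG : ∀ i j, G.Adj i j → G.degree i = 2) {u v : V} (huv : G.Adj u v) :
    (3 - √5) / 2 * green G v v ≤ green G u v := by
  obtain ⟨⟨⟨a, b⟩, hab⟩, -, hmin⟩ := Finset.exists_min_image (Finset.univ : Finset G.Dart)
    (fun d => green G d.fst d.snd / green G d.snd d.snd) ⟨⟨(u, v), huv⟩, Finset.mem_univ _⟩
  set ρ := green G a b / green G b b
  have hle {i j : V} (hij : G.Adj i j) : ρ * green G j j ≤ green G i j :=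
    (le_div_iff₀ (green_self_pos G j)).1 (hmin ⟨(i, j), hij⟩ (Finset.mem_univ _))
  have hab' : green G a b = ρ * green G b b := (div_mul_cancel₀ _ (green_self_pos G b).ne').symm
  obtain ⟨w, hbw, hN⟩ := exists_neighborFinset_eq_pair (hG a b hab) hab
  have haw : G.Adj a w := by simp [← G.mem_neighborFinset, hN]
  have hfar : ρ * green G a b ≤ green G w b := by
    refine le_of_mul_le_mul_right ?_ (green_self_pos G a)
    calc ρ * green G a b * green G a a = ρ * green G a a * green G a b := by ring
      _ ≤ green G w a * green G a b :=
        mul_le_mul_of_nonneg_right (hle haw.symm) (green_nonneg G a b)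
      _ ≤ green G w b * green G a a := green_mul_green_le G w a b
  have hrow := three_mul_green hN hbw b
  rw [Pi.single_eq_of_ne hab.ne, hab'] at hrow
  rw [hab'] at hfar
  have hquad : 1 + ρ ^ 2 ≤ 3 * ρ := by
    refine le_of_mul_le_mul_right ?_ (green_self_pos G b)
    linarith
  have hroot : (3 - √5) / 2 ≤ ρ := by
    have h := Real.abs_le_sqrt (show (3 - 2 * ρ) ^ 2 ≤ 5 by linarith)
    linarith [le_abs_self (3 - 2 * ρ)]
  exact (mul_le_mul_of_nonneg_right hroot (green_self_pos G v).le).trans (hle huv)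

theorem one_le_sqrt_five_mul_green (hG : ∀ i j, G.Adj i j → G.degree i = 2) {u v : V}
    (huv : G.Adj v u) : 1 ≤ √5 * green G v v := by
  obtain ⟨w, huw, hN⟩ := exists_neighborFinset_eq_pair (hG v u huv) huv
  have hvw : G.Adj v w := by simp [← G.mem_neighborFinset, hN]
  have hrow := three_mul_green hN huw v
  rw [Pi.single_eq_same] at hrow
  linarith [le_green_of_adj hG huv.symm, le_green_of_adj hG hvw.symm]

/-- At a vertex `v` maximizing `green G v v`, the resistances of the two edges add up to at most
`2 * (1 - green G v v)`. -/
theorem exists_adj_resistance_le (hG : ∀ i j, G.Adj i j → G.degree i = 2) {a b : V}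
    (hab : G.Adj a b) : ∃ v w, G.Adj v w ∧ resistance G v w ≤ 1 - green G v v := by
  obtain ⟨v, hv, hmax⟩ := Finset.exists_max_image {v | 0 < G.degree v} (fun v => green G v v)
    ⟨a, by simp [hG a b hab]⟩
  obtain ⟨u, hvu⟩ := (G.degree_pos_iff_exists_adj v).1 (Finset.mem_filter.1 hv).2
  obtain ⟨w, huw, hN⟩ := exists_neighborFinset_eq_pair (hG v u hvu) hvu
  have hvw : G.Adj v w := by simp [← G.mem_neighborFinset, hN]
  have hle {y : V} (hy : G.Adj v y) : green G y y ≤ green G v v :=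
    hmax y (by simp [hG y v hy.symm])
  have hrow := three_mul_green hN huw v
  rw [Pi.single_eq_same, green_comm G u, green_comm G w] at hrow
  have hsum : resistance G v u + resistance G v w ≤ 2 * (1 - green G v v) := by
    rw [resistance, resistance]
    linarith [hle hvu, hle hvw]
  rcases le_total (resistance G v u) (resistance G v w) with h | h
  · exact ⟨v, u, hvu, by linarith⟩
  · exact ⟨v, w, hvw, by linarith⟩

theorem exists_forestCount_le_of_degree_eq_two (hG : ∀ i j, G.Adj i j → G.degree i = 2) {a b : V}
    (hab : G.Adj a b) :
    ∃ u v, G.Adj u v ∧ forestCount G ≤ √5 * forestCount (G.deleteEdges {s(u, v)}) := by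
  obtain ⟨v, w, hvw, hR⟩ := exists_adj_resistance_le hG hab
  refine ⟨v, w, hvw, ?_⟩
  rw [forestCount_deleteEdges hvw, mul_left_comm]
  refine le_mul_of_one_le_right (forestCount_pos G).le ?_
  calc (1 : ℝ) ≤ √5 * green G v v := one_le_sqrt_five_mul_green hG hvw
    _ ≤ √5 * (1 - resistance G v w) := by gcongr; linarith

end Regular

section Unicyclic

variable {G}

theorem degree_le_degree_deleteEdges_add_one (e : Sym2 V) (v : V) :
    G.degree v ≤ (G.deleteEdges {e}).degree v + 1 := by
  simp only [← SimpleGraph.card_neighborFinset_eq_degree]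
  by_cases hv : v ∈ e
  · obtain ⟨w, rfl⟩ := hv
    refine (Finset.card_le_card fun j hj => ?_).trans (Finset.card_insert_le w _)
    by_cases hjw : j = w
    · simp [hjw]
    · have hvj : G.Adj v j := (G.mem_neighborFinset v j).1 hj
      have hjv : s(v, j) ≠ s(v, w) := fun h => hjw (Sym2.congr_right.1 h)
      simp [hvj, hjv]
  · refine Nat.le_succ_of_le (Finset.card_le_card fun j hj => ?_)
    have hvj : G.Adj v j := (G.mem_neighborFinset v j).1 hj
    have hjv : s(v, j) ≠ e := fun h => hv (h ▸ Sym2.mem_mk_left v j)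
    simp [hvj, hjv]

theorem forestCount_le_of_three_le_degree {u v : V} (huv : G.Adj u v) (hu : 3 ≤ G.degree u)
    (hv : 2 ≤ G.degree v) :
    forestCount G ≤ √5 * forestCount (G.deleteEdges {s(u, v)}) := by
  have hu' : (2 : ℝ) ≤ (G.deleteEdges {s(u, v)}).degree u := by
    exact_mod_cast Nat.le_of_succ_le_succ
      (hu.trans (degree_le_degree_deleteEdges_add_one s(u, v) u))
  have hv' : (1 : ℝ) ≤ (G.deleteEdges {s(u, v)}).degree v := by
    exact_mod_cast Nat.le_of_succ_le_succ
      (hv.trans (degree_le_degree_deleteEdges_add_one s(u, v) v))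
  rw [forestCount_eq_deleteEdges_mul huv, mul_comm, resistance]
  refine mul_le_mul_of_nonneg_right ?_ (forestCount_pos _).le
  set H := G.deleteEdges {s(u, v)}
  have hKu : green H u u ≤ 1 / 2 := by
    nlinarith [green_self_mul_degree_le H u, green_self_pos H u]
  have hKv : green H v v ≤ 2 / 3 := by
    nlinarith [green_self_mul_degree_le H v, green_self_pos H v]
  have hsqrt : 13 / 6 ≤ √5 := Real.le_sqrt_of_sq_le (by norm_num)
  linarith [green_nonneg H u v]

theorem exists_forestCount_le_sqrt_five_mul {S : Finset V} (hS : ∀ v ∉ S, G.degree v = 0)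
    (hne : S.Nonempty) (hcard : G.edgeFinset.card = S.card) :
    ∃ u v, G.Adj u v ∧ forestCount G ≤ √5 * forestCount (G.deleteEdges {s(u, v)}) := by
  by_cases! hbig : ∃ u v, G.Adj u v ∧ 3 ≤ G.degree u ∧ 2 ≤ G.degree v
  · obtain ⟨u, v, huv, hu, hv⟩ := hbig
    exact ⟨u, v, huv, forestCount_le_of_three_le_degree huv hu hv⟩
  have hle := degree_le_two_of_card_edgeFinset_eq hS hcard
    fun u v huv hu => Nat.le_of_lt_succ (hbig u v huv hu)
  have htwo {v : V} (hv : v ∈ S) := degree_eq_two_of_card_edgeFinset_eq hS hcard hle hv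
  obtain ⟨a, ha⟩ := hne
  obtain ⟨b, hab⟩ := (G.degree_pos_iff_exists_adj a).1 (by rw [htwo ha]; norm_num)
  exact exists_forestCount_le_of_degree_eq_two
    (fun i j hij => htwo (mem_of_adj_of_degree_eq_zero hS hij)) hab

end Unicyclic

section Fibonacci

theorem sqrt_five_mul_fib_mul_fib_lt {a b : ℕ} (ha : 0 < a) (hb : 0 < b) :
    √5 * Nat.fib (2 * a) * Nat.fib (2 * b) < Nat.fib (2 * (a + b)) := by
  have hxy : Real.goldenConj ^ 2 < Real.goldenRatio ^ 2 := by
    rw [Real.goldenConj_sq, Real.goldenRatio_sq]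
    linarith [Real.goldenConj_neg, Real.goldenRatio_pos]
  have hy : 0 < Real.goldenConj ^ 2 := sq_pos_of_neg Real.goldenConj_neg
  simp only [Real.coe_fib_eq, pow_mul, pow_add]
  generalize Real.goldenConj ^ 2 = y at *
  generalize Real.goldenRatio ^ 2 = x at *
  have hxa : y ^ a < x ^ a := pow_lt_pow_left₀ hxy hy.le ha.ne'
  have hxb : y ^ b < x ^ b := pow_lt_pow_left₀ hxy hy.le hb.ne'
  rw [mul_div_cancel₀ _ (by positivity), mul_div_assoc']
  gcongr
  linarith [mul_pos (pow_pos hy a) (sub_pos.2 hxb), mul_pos (pow_pos hy b) (sub_pos.2 hxa)]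

theorem fib_two_mul_succ {k : ℕ} (hk : 0 < k) :
    Nat.fib (2 * (k + 1)) = 2 * Nat.fib (2 * k) + Nat.fib (2 * k - 1) := by
  obtain ⟨m, rfl⟩ := Nat.exists_eq_add_of_lt hk
  grind [Nat.fib_add_two]

theorem fib_two_mul_succ_sub_one {k : ℕ} (hk : 0 < k) :
    Nat.fib (2 * (k + 1) - 1) = Nat.fib (2 * k) + Nat.fib (2 * k - 1) := by
  obtain ⟨m, rfl⟩ := Nat.exists_eq_add_of_lt hk
  grind [Nat.fib_add_two]

theorem fib_two_mul_lt {k : ℕ} (hk : 0 < k) : Nat.fib (2 * k) < 2 * Nat.fib (2 * k - 1) := by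
  rcases k with _ | _ | k
  · simp at hk
  · simp
  · rw [fib_two_mul_succ k.succ_pos, fib_two_mul_succ_sub_one k.succ_pos]
    have : 0 < Nat.fib (2 * (k + 1) - 1) := Nat.fib_pos.2 (by lia)
    lia

end Fibonacci

section Path

/-- The edges of `G` are exactly the steps of the duplicate-free list `l`, that is, `G` is a path
traversed by `l` together with isolated vertices. -/
def IsPathOn {V : Type*} (G : SimpleGraph V) (l : List V) : Prop :=
  l.Nodup ∧ ∀ e, e ∈ G.edgeSet ↔ ∃ p ∈ l.zip l.tail, e = s(p.1, p.2)

theorem notMem_of_mem_zip_tail {V : Type*} {l : List V} {u : V} (hu : u ∉ l) {p : V × V}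
    (hp : p ∈ l.zip l.tail) : u ∉ s(p.1, p.2) := by
  obtain ⟨h1, h2⟩ := List.of_mem_zip hp
  intro h
  rcases Sym2.mem_iff.1 h with rfl | rfl
  · exact hu h1
  · exact hu (List.mem_of_mem_tail h2)

theorem isPathOn_singleton_of_card_edgeFinset_eq_zero {V : Type*} {G : SimpleGraph V}
    [Fintype G.edgeSet] (hG : G.edgeFinset.card = 0) (u : V) : IsPathOn G [u] := by
  have hG' : ∀ e, e ∉ G.edgeSet := by
    simpa [Finset.eq_empty_iff_forall_notMem] using Finset.card_eq_zero.1 hG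
  exact ⟨List.nodup_singleton u, fun e => by simp [hG' e]⟩

theorem isPathOn_cons_cons {V : Type*} {G : SimpleGraph V} {u w : V} {t : List V} :
    IsPathOn G (u :: w :: t) ↔
      u ∉ w :: t ∧ G.Adj u w ∧ IsPathOn (G.deleteEdges {s(u, w)}) (w :: t) := by
  have hsteps (hu : u ∉ w :: t) (p : V × V) (hp : p ∈ (w :: t).zip t) : s(p.1, p.2) ≠ s(u, w) :=
    fun h => notMem_of_mem_zip_tail hu hp (h ▸ Sym2.mem_mk_left u w)
  simp only [IsPathOn, List.nodup_cons (a := u), List.tail_cons, List.zip_cons_cons,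
    List.exists_mem_cons_iff, SimpleGraph.edgeSet_deleteEdges, Set.mem_sdiff, Set.mem_singleton_iff,
    ← G.mem_edgeSet]
  grind

theorem IsPathOn.neighborFinset_eq {V : Type*} {G : SimpleGraph V} {u w : V} {t : List V}
    [Fintype (G.neighborSet u)] (h : IsPathOn G (u :: w :: t)) : G.neighborFinset u = {w} := by
  obtain ⟨hu, huw, -, hedges⟩ := isPathOn_cons_cons.1 h
  ext j
  rw [G.mem_neighborFinset, Finset.mem_singleton]
  refine ⟨fun huj => ?_, fun hj => hj ▸ huw⟩
  by_contra hj
  obtain ⟨p, hp, hpu⟩ := (hedges s(u, j)).1 (by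
    simp [SimpleGraph.edgeSet_deleteEdges, huj, hj, huw.ne])
  exact notMem_of_mem_zip_tail hu hp (hpu ▸ Sym2.mem_mk_left u j)

variable {G}

theorem forestMatrix_of_edgeSet_eq_empty (hG : G.edgeSet = ∅) : forestMatrix G = 1 := by
  refine ext_of_mulVec_single fun k => funext fun i => ?_
  have hi : G.neighborFinset i = ∅ := by
    simp [SimpleGraph.edgeSet_eq_empty.1 hG]
  rw [forestMatrix_mulVec_apply, hi, Finset.sum_empty, add_zero, one_mulVec]

theorem IsPathOn.forestCount_eq {u : V} {t : List V} (h : IsPathOn G (u :: t)) :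
    forestCount G = Nat.fib (2 * (u :: t).length) ∧
      rootedForestCount G u = Nat.fib (2 * (u :: t).length - 1) := by
  induction t generalizing G u with
  | nil =>
    have hG : forestMatrix G = 1 :=
      forestMatrix_of_edgeSet_eq_empty (Set.eq_empty_iff_forall_notMem.2 fun e he => by
        simpa using (h.2 e).1 he)
    simp [rootedForestCount, forestCount, green, hG]
  | cons w t ih =>
    have hu := h.neighborFinset_eq
    obtain ⟨hf, hr⟩ := ih (isPathOn_cons_cons.1 h).2.2
    rw [forestCount_of_neighborFinset_eq_singleton hu,
      rootedForestCount_of_neighborFinset_eq_singleton hu, hf, hr, List.length_cons (a := u),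
      fib_two_mul_succ (by simp), fib_two_mul_succ_sub_one (by simp)]
    push_cast
    exact ⟨rfl, rfl⟩

end Path

section Induction

/-- The dichotomy to be proved for a graph with `S.card - 1` edges among the vertices of `S`. -/
def ForestBound (S : Finset V) : Prop :=
  forestCount G < Nat.fib (2 * S.card) ∨ ∃ l, IsPathOn G l ∧ l.toFinset = S

/-- The forest counts of `G` rooted at `u` and unrooted are bounded as if `G` consisted of a path
starting at `u` and, on the remaining vertices, of a graph with one edge more than a path, whose
removal costs a factor of at most `√5`. -/
def SplitBound (k : ℕ) (u : V) : Prop :=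
  ∃ a b, 0 < a ∧ 0 < b ∧ a + b = k ∧
    rootedForestCount G u ≤ √5 * Nat.fib (2 * a - 1) * Nat.fib (2 * b) ∧
    forestCount G ≤ √5 * Nat.fib (2 * a) * Nat.fib (2 * b)

/-- The strengthening of `ForestBound` at a vertex `u` that survives attaching a leaf to `u`. The
bound on `rootedForestCount` alone may fail if `u` ends a path component of `G`. -/
def RootedForestBound (S : Finset V) (u : V) : Prop :=
  (ForestBound G S ∧ rootedForestCount G u < Nat.fib (2 * S.card - 1)) ∨
    (∃ t, IsPathOn G (u :: t) ∧ (u :: t).toFinset = S) ∨ SplitBound G S.card u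

variable {G} {S : Finset V}

theorem SplitBound.forestCount_lt {k : ℕ} {u : V} (h : SplitBound G k u) :
    forestCount G < Nat.fib (2 * k) := by
  obtain ⟨a, b, ha, hb, rfl, -, hf⟩ := h
  exact hf.trans_lt (sqrt_five_mul_fib_mul_fib_lt ha hb)

theorem ForestBound.forestCount_le (h : ForestBound G S) (hS : S.Nonempty) :
    forestCount G ≤ Nat.fib (2 * S.card) := by
  rcases h with h | ⟨_ | ⟨u, t⟩, hl, rfl⟩
  · exact h.le
  · simp at hS
  · rw [List.toFinset_card_of_nodup hl.1, hl.forestCount_eq.1]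

theorem SplitBound.of_neighborFinset_eq_singleton {k : ℕ} {u w : V} (hu : G.neighborFinset u = {w})
    (h : SplitBound (G.deleteEdges {s(u, w)}) k w) : SplitBound G (k + 1) u := by
  obtain ⟨a, b, ha, hb, rfl, hr, hf⟩ := h
  refine ⟨a + 1, b, a.succ_pos, hb, by lia, ?_, ?_⟩
  · rw [rootedForestCount_of_neighborFinset_eq_singleton hu, fib_two_mul_succ_sub_one ha]
    push_cast
    linarith
  · rw [forestCount_of_neighborFinset_eq_singleton hu, fib_two_mul_succ ha]
    push_cast
    linarith

theorem RootedForestBound.forestBound {u : V} (h : RootedForestBound G S u) : ForestBound G S := by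
  rcases h with ⟨hf, -⟩ | ⟨t, ht⟩ | hsplit
  · exact hf
  · exact .inr ⟨_, ht⟩
  · exact .inl hsplit.forestCount_lt

theorem RootedForestBound.of_neighborFinset_eq_singleton {u w : V} (hu : G.neighborFinset u = {w})
    (huS : u ∈ S) (hwS : w ∈ S)
    (h : RootedForestBound (G.deleteEdges {s(u, w)}) (S.erase u) w) : RootedForestBound G S u := by
  have huw := adj_of_neighborFinset_eq_singleton hu
  have hne : (S.erase u).Nonempty := ⟨w, Finset.mem_erase.2 ⟨huw.ne', hwS⟩⟩
  rw [RootedForestBound, ← Finset.card_erase_add_one huS]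
  rcases h with ⟨hf, hlt⟩ | ⟨t, ht, htS⟩ | hsplit
  · have hle := hf.forestCount_le hne
    rw [ForestBound, ← Finset.card_erase_add_one huS, fib_two_mul_succ hne.card_pos,
      fib_two_mul_succ_sub_one hne.card_pos, forestCount_of_neighborFinset_eq_singleton hu,
      rootedForestCount_of_neighborFinset_eq_singleton hu]
    push_cast
    exact .inl ⟨.inl (by linarith), by linarith⟩
  · have hut : u ∉ w :: t := by simp [← List.mem_toFinset, htS]
    refine .inr (.inl ⟨w :: t, isPathOn_cons_cons.2 ⟨hut, huw, ht⟩, ?_⟩)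
    rw [List.toFinset_cons, htS, Finset.insert_erase huS]
  · exact .inr (.inr (hsplit.of_neighborFinset_eq_singleton hu))

theorem RootedForestBound.of_two_le_degree {u : V} (hu : 2 ≤ G.degree u) (hf : ForestBound G S)
    (hS : S.Nonempty) : RootedForestBound G S u := by
  have hdeg : (2 : ℝ) ≤ G.degree u := by exact_mod_cast hu
  have hK : green G u u ≤ 1 / 2 := by
    nlinarith [green_self_mul_degree_le G u, green_self_pos G u]
  have hfib : (Nat.fib (2 * S.card) : ℝ) < 2 * Nat.fib (2 * S.card - 1) := by
    exact_mod_cast fib_two_mul_lt hS.card_pos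
  refine .inl ⟨hf, ?_⟩
  calc rootedForestCount G u ≤ forestCount G * (1 / 2) :=
        mul_le_mul_of_nonneg_left hK (forestCount_pos G).le
    _ < Nat.fib (2 * S.card - 1) := by linarith [hf.forestCount_le hS]

theorem SplitBound.of_neighborFinset_eq_empty {u v w : V} (hu : G.neighborFinset u = ∅)
    (hf : forestCount G ≤ √5 * forestCount (G.deleteEdges {s(v, w)}))
    (h : ForestBound (G.deleteEdges {s(v, w)}) S) (hS : S.Nonempty) :
    SplitBound G (S.card + 1) u := by
  have hle : forestCount G ≤ √5 * Nat.fib (2 * S.card) :=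
    hf.trans (mul_le_mul_of_nonneg_left (h.forestCount_le hS) (Real.sqrt_nonneg 5))
  refine ⟨1, S.card, one_pos, hS.card_pos, add_comm _ _, ?_, ?_⟩
  · simpa [rootedForestCount, green_self_of_neighborFinset_eq_empty hu] using hle
  · simpa using hle

theorem card_edgeFinset_deleteEdges_add_one {u v : V} (huv : G.Adj u v) :
    (G.deleteEdges {s(u, v)}).edgeFinset.card + 1 = G.edgeFinset.card := by
  have h : (G.deleteEdges {s(u, v)}).edgeFinset = G.edgeFinset.erase s(u, v) := by
    ext e
    simp [SimpleGraph.edgeSet_deleteEdges, and_comm]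
  rw [h, Finset.card_erase_add_one (G.mem_edgeFinset.2 huv)]

theorem degree_deleteEdges_eq_zero_of_notMem_erase {u v w : V} (hS : ∀ x ∉ S, G.degree x = 0)
    (hu : (G.deleteEdges {s(v, w)}).degree u = 0) :
    ∀ x ∉ S.erase u, (G.deleteEdges {s(v, w)}).degree x = 0 := by
  intro x hx
  rcases eq_or_ne x u with rfl | hxu
  · exact hu
  · have hxS : x ∉ S := fun h => hx (Finset.mem_erase.2 ⟨hxu, h⟩)
    exact Nat.le_zero.1 (hS x hxS ▸ SimpleGraph.degree_le_of_le (G.deleteEdges_le _))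

theorem RootedForestBound.of_degree_eq_zero {u : V} (hS : ∀ v ∉ S, G.degree v = 0)
    (hcard : G.edgeFinset.card + 1 = S.card) (huS : u ∈ S) (hu : G.degree u = 0)
    (ih : ∀ v w, G.Adj v w → ForestBound (G.deleteEdges {s(v, w)}) (S.erase u)) :
    RootedForestBound G S u := by
  have hcardS := Finset.card_erase_add_one huS
  rcases (S.erase u).eq_empty_or_nonempty with he | hne
  · have hpath : IsPathOn G [u] := isPathOn_singleton_of_card_edgeFinset_eq_zero
      (by rw [he, Finset.card_empty] at hcardS; lia) u
    have hSu : [u].toFinset = S := by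
      rw [← Finset.insert_erase huS, he]
      rfl
    exact .inr (.inl ⟨[], hpath, hSu⟩)
  · have hS' : ∀ v ∉ S.erase u, G.degree v = 0 := by
      intro v hv
      rcases eq_or_ne v u with rfl | hvu
      · exact hu
      · exact hS v fun h => hv (Finset.mem_erase.2 ⟨hvu, h⟩)
    obtain ⟨v, w, hvw, hf⟩ := exists_forestCount_le_sqrt_five_mul hS' hne (by lia)
    have hsplit := SplitBound.of_neighborFinset_eq_empty (Finset.card_eq_zero.1 hu) hf
      (ih v w hvw) hne
    rw [hcardS] at hsplit
    exact .inr (.inr hsplit)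

theorem RootedForestBound.of_card_edgeFinset (hS : ∀ v ∉ S, G.degree v = 0)
    (hcard : G.edgeFinset.card + 1 = S.card) : ∀ u ∈ S, RootedForestBound G S u := by
  induction hn : S.card generalizing G S with
  | zero => lia
  | succ n ih =>
    have hdel {u v w : V} (huS : u ∈ S) (hvw : G.Adj v w)
        (hu : (G.deleteEdges {s(v, w)}).degree u = 0) :
        ∀ x ∈ S.erase u, RootedForestBound (G.deleteEdges {s(v, w)}) (S.erase u) x :=
      have hE := card_edgeFinset_deleteEdges_add_one hvw
      have hV := Finset.card_erase_add_one huS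
      ih (degree_deleteEdges_eq_zero_of_notMem_erase hS hu) (by lia) (by lia)
    have hlow {u : V} (huS : u ∈ S) (hu : G.degree u ≤ 1) : RootedForestBound G S u := by
      rcases Nat.le_one_iff_eq_zero_or_eq_one.1 hu with hu | hu
      · refine .of_degree_eq_zero hS hcard huS hu fun v w hvw => ?_
        have hvS : v ∈ S.erase u := by
          refine Finset.mem_erase.2 ⟨?_, mem_of_adj_of_degree_eq_zero hS hvw⟩
          rintro rfl
          exact ((G.degree_pos_iff_exists_adj v).2 ⟨w, hvw⟩).ne' hu
        refine (hdel huS hvw ?_ v hvS).forestBound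
        exact Nat.le_zero.1 (hu ▸ SimpleGraph.degree_le_of_le (G.deleteEdges_le _))
      · obtain ⟨w, hw⟩ := Finset.card_eq_one.1 hu
        have huw := adj_of_neighborFinset_eq_singleton hw
        have hwS : w ∈ S := mem_of_adj_of_degree_eq_zero hS huw.symm
        have hu' := neighborFinset_deleteEdges_of_eq_singleton hw
        exact .of_neighborFinset_eq_singleton hw huS hwS
          (hdel huS huw (Finset.card_eq_zero.2 hu') w (Finset.mem_erase.2 ⟨huw.ne', hwS⟩))
    obtain ⟨x, hxS, hx⟩ := exists_degree_le_one_of_card_edgeFinset_lt hS (by lia)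
    intro u hu
    rcases Nat.lt_or_ge (G.degree u) 2 with hdeg | hdeg
    · exact hlow hu (Nat.le_of_lt_succ hdeg)
    · exact .of_two_le_degree hdeg (hlow hxS hx).forestBound ⟨x, hxS⟩

end Induction

end Forests

section Cone

theorem nst_eq_forestCount {n : ℕ} {W : Fin (n + 1) → Fin (n + 1) → ℝ} {G : SimpleGraph (Fin n)}
    [DecidableRel G.Adj]
    (hW : ∀ i j : Fin n, W i.castSucc j.castSucc = if G.Adj i j then 1 else 0)
    (hlast : ∀ i : Fin n, W i.castSucc (Fin.last n) = 1) : nst W = forestCount G := by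
  rw [nst, forestCount]
  congr 1
  ext i j
  rw [submatrix_apply, lapG, forestMatrix, Matrix.add_apply, SimpleGraph.lapMatrix,
    Matrix.sub_apply, SimpleGraph.degMatrix, SimpleGraph.adjMatrix_apply, one_apply,
    diagonal_apply, hW]
  rcases eq_or_ne i j with rfl | hij
  · simp [Fin.sum_univ_castSucc, hW, hlast, SimpleGraph.degree,
      SimpleGraph.neighborFinset_eq_filter, add_comm]
  · simp [hij]

theorem starW_castSucc_castSucc {n : ℕ} (i j : Fin n) : starW n i.castSucc j.castSucc = 0 := by
  simp [starW, Fin.castSucc_ne_last]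

theorem starW_castSucc_last {n : ℕ} (i : Fin n) : starW n i.castSucc (Fin.last n) = 1 := by
  simp [starW, Fin.castSucc_ne_last]

theorem nst_starPlusEdges {n : ℕ} {P : Finset (Sym2 (Fin n))} {G : SimpleGraph (Fin n)}
    [DecidableRel G.Adj] (hG : G.edgeSet = P) : nst (starPlusEdges n P) = forestCount G := by
  refine nst_eq_forestCount (fun i j => ?_) fun i => ?_
  · rw [starPlusEdges, starW_castSucc_castSucc, zero_add]
    simp [Fin.castSucc_inj, ← Finset.mem_coe, ← hG]
  · rw [starPlusEdges, starW_castSucc_last, if_neg, add_zero]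
    rintro ⟨a, b, -, hb, -⟩
    exact Fin.castSucc_ne_last b hb.symm

theorem nst_fanW_s11 (n : ℕ) [DecidableRel (SimpleGraph.pathGraph n).Adj] :
    nst (fanW n) = forestCount (SimpleGraph.pathGraph n) := by
  refine nst_eq_forestCount (fun i j => ?_) fun i => ?_
  · rw [fanW, starW_castSucc_castSucc, zero_add]
    simp [Fin.castSucc_ne_last, SimpleGraph.pathGraph_adj]
  · have : (i : ℕ) < n := i.isLt
    simp [fanW, starW_castSucc_last]
    lia

theorem mem_finRange_zip_tail {n : ℕ} {p : Fin n × Fin n} :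
    p ∈ (List.finRange n).zip (List.finRange n).tail ↔ (p.1 : ℕ) + 1 = p.2 := by
  simp only [List.mem_iff_getElem, List.getElem_zip, List.getElem_tail, List.getElem_finRange,
    Prod.ext_iff, Fin.ext_iff, Fin.val_cast, List.length_zip, List.length_tail,
    List.length_finRange]
  have := p.2.isLt
  constructor
  · rintro ⟨i, -, h1, h2⟩
    lia
  · exact fun h => ⟨p.1, by lia, rfl, h⟩

theorem isPathOn_finRange (n : ℕ) : IsPathOn (SimpleGraph.pathGraph n) (List.finRange n) := by
  refine ⟨List.nodup_finRange n, fun e => ?_⟩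
  induction e with | _ a b => ?_
  simp only [mem_finRange_zip_tail, SimpleGraph.mem_edgeSet, SimpleGraph.pathGraph_adj, Prod.exists,
    Sym2.eq_iff]
  grind

theorem nst_fanW_eq_fib {n : ℕ} (hn : 0 < n) : nst (fanW n) = Nat.fib (2 * n) := by
  classical
  obtain ⟨m, rfl⟩ := Nat.exists_eq_succ_of_ne_zero hn.ne'
  have h := isPathOn_finRange (m + 1)
  rw [List.finRange_succ] at h
  rw [nst_fanW_s11, h.forestCount_eq.1]
  simp

end Cone

theorem stmt11 (n : ℕ) (hn : 2 ≤ n) (E' : Finset (Sym2 (Fin n)))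
    (hE' : ∀ e ∈ E', ¬ e.IsDiag)
    (P : Finset (Sym2 (Fin n))) (hPE : P ⊆ E') (hcard : P.card = n - 1)
    (hnotham : ¬ IsHamPathEdges n P) :
    nst (starPlusEdges n P) < nst (fanW n) := by
  classical
  obtain ⟨G, hG⟩ : ∃ G : SimpleGraph (Fin n), G.edgeSet = P := by
    refine ⟨.fromEdgeSet P, ?_⟩
    rw [SimpleGraph.edgeSet_fromEdgeSet, sdiff_eq_left]
    exact Set.disjoint_left.2 fun e he => hE' e (hPE he)
  have hGcard : G.edgeFinset.card + 1 = (Finset.univ : Finset (Fin n)).card := by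
    simp [SimpleGraph.edgeFinset, hG, hcard]
    lia
  have hbound : ForestBound G Finset.univ :=
    (RootedForestBound.of_card_edgeFinset (by simp) hGcard ⟨0, by lia⟩
      (Finset.mem_univ _)).forestBound
  rw [nst_starPlusEdges hG, nst_fanW_eq_fib (by lia)]
  rcases hbound with hlt | ⟨l, ⟨hnodup, hedges⟩, hl⟩
  · simpa using hlt
  · refine absurd ⟨l, hnodup, fun v => ?_, fun e => ?_⟩ hnotham
    · rw [← List.mem_toFinset, hl]
      exact Finset.mem_univ v
    · rw [← hedges, hG, Finset.mem_coe]
end
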